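/- arXiv:0904.2194 — 2 statements merged into one kernel-verified Lean document; each statement's English description precedes it below -/
import Mathlib

section
/- Let P be the path on [n+1] with edges (i, i+1) labeled i for i = 1, …, n (an edge-labeled good forest), and let R be any B-reduction tree with root P. Then the map sending each leaf of R to its underlying unlabeled graph is injective; its image is exactly the set of all noncrossing alternating forests on [n+1] that contain the edge (1, n+1); and every leaf can be transformed by a finite sequence of label swaps into the lexicographic edge-labeling of its underlying forest. -/
open scoped BigOperators

namespace RPaper

abbrev Vtype (n : ℕ) := Fin (n+1) → ℝ

abbrev Edge (n : ℕ) := Fin (n+1) × Fin (n+1)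

abbrev EdgeSet (n : ℕ) := Finset (Edge n)

/-- The vector `e_i - e_j`. -/
def ev {n : ℕ} (i j : Fin (n+1)) : Vtype n := Pi.single i 1 - Pi.single j 1

/-- Edges are stored as pairs `(i,j)` with `i < j`. -/
def IsGraph {n : ℕ} (E : EdgeSet n) : Prop := ∀ e ∈ E, e.1 < e.2

/-- The simple graph underlying an edge set. -/
def toSG {n : ℕ} (E : EdgeSet n) : SimpleGraph (Fin (n+1)) :=
  SimpleGraph.fromRel (fun a b => (a, b) ∈ E)

def Acyclic {n : ℕ} (E : EdgeSet n) : Prop := (toSG E).IsAcyclic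

def IsForest {n : ℕ} (E : EdgeSet n) : Prop := IsGraph E ∧ Acyclic E

/-- A tree on the full vertex set `[n+1]`: connected and acyclic. -/
def IsTreeG {n : ℕ} (E : EdgeSet n) : Prop := IsGraph E ∧ (toSG E).IsTree

def Noncrossing {n : ℕ} (E : EdgeSet n) : Prop :=
  ¬ ∃ i j k l : Fin (n+1), i < j ∧ j < k ∧ k < l ∧ (i, k) ∈ E ∧ (j, l) ∈ E

def Alternating {n : ℕ} (E : EdgeSet n) : Prop :=
  ¬ ∃ i j k : Fin (n+1), i < j ∧ j < k ∧ (i, j) ∈ E ∧ (j, k) ∈ E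

/-- The positive roots `e_i - e_j`, `i < j`. -/
def PhiPlus (n : ℕ) : Set (Vtype n) := {v | ∃ i j : Fin (n+1), i < j ∧ v = ev i j}

/-- The cone of nonnegative combinations of the vectors of `E`. -/
def cone {n : ℕ} (E : EdgeSet n) : Set (Vtype n) :=
  {x | ∃ c : Edge n → ℝ, (∀ e, 0 ≤ c e) ∧ x = ∑ e ∈ E, c e • ev e.1 e.2}

def Vbar {n : ℕ} (E : EdgeSet n) : Set (Vtype n) := PhiPlus n ∩ cone E

/-- The root polytope of a graph. -/
def RootPoly {n : ℕ} (E : EdgeSet n) : Set (Vtype n) := convexHull ℝ ({0} ∪ Vbar E)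

/-- The full root polytope `P(A_n^+)`. -/
def FullRootPoly (n : ℕ) : Set (Vtype n) := convexHull ℝ ({0} ∪ PhiPlus n)

/-- Transitive closure: `(i,j)`, `i<j`, whenever there is an increasing path in `E`. -/
def closureT {n : ℕ} (E : EdgeSet n) : Set (Edge n) :=
  {p | p.1 < p.2 ∧ Relation.TransGen (fun a b => a < b ∧ (a, b) ∈ E) p.1 p.2}

/-- Noncrossing alternating spanning trees of the transitive closure of `E`. -/
def NCASpanningTrees {n : ℕ} (E : EdgeSet n) : Set (EdgeSet n) :=
  {F | IsTreeG F ∧ Noncrossing F ∧ Alternating F ∧ ↑F ⊆ closureT E}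

/-- The `t`-th dilate of a set. -/
def dilate {n : ℕ} (t : ℕ) (P : Set (Vtype n)) : Set (Vtype n) := (fun x => (t : ℝ) • x) '' P

/-- Number of lattice points of the `t`-th dilate. -/
noncomputable def latticeCount {n : ℕ} (P : Set (Vtype n)) (t : ℕ) : ℕ :=
  Set.ncard {x ∈ dilate t P | ∀ i, ∃ z : ℤ, x i = (z : ℝ)}

/-- Dimension of the affine span of a set. -/
noncomputable def polyDim {n : ℕ} (P : Set (Vtype n)) : ℕ :=
  Module.finrank ℝ (affineSpan ℝ P).direction

/-- The points `0` and `e_i - e_j`, `(i,j) ∈ F`. -/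
def vertSet {n : ℕ} (F : EdgeSet n) : Set (Vtype n) :=
  {0} ∪ {v | ∃ e ∈ F, v = ev e.1 e.2}

/-- An edge-labeled graph: the edge at list position `a` carries label `a+1`. -/
abbrev LGraph (n : ℕ) := List (Edge n)

def LIsGraph {n : ℕ} (L : LGraph n) : Prop := (∀ e ∈ L, e.1 < e.2) ∧ L.Nodup

/-- Two edges are vertex-disjoint. -/
def vDisj {n : ℕ} (e f : Edge n) : Prop :=
  e.1 ≠ f.1 ∧ e.1 ≠ f.2 ∧ e.2 ≠ f.1 ∧ e.2 ≠ f.2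

/-- A label swap: exchange two vertex-disjoint edges carrying consecutive labels. -/
inductive SwapStep {n : ℕ} : LGraph n → LGraph n → Prop
  | mk (l₁ l₂ : LGraph n) (e f : Edge n) (h : vDisj e f) :
      SwapStep (l₁ ++ e :: f :: l₂) (l₁ ++ f :: e :: l₂)

/-- One step: either a label swap, or one of the three results of a B-reduction applied
to edges `(i,j)_a`, `(j,k)_{a+1}` with `i < j < k`. -/
inductive BStep {n : ℕ} : LGraph n → LGraph n → Prop
  | swap {L L' : LGraph n} : SwapStep L L' → BStep L L'
  | r1 (l₁ l₂ : LGraph n) (i j k : Fin (n+1)) (hij : i < j) (hjk : j < k) :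
      BStep (l₁ ++ (i, j) :: (j, k) :: l₂) (l₁ ++ (i, k) :: (i, j) :: l₂)
  | r2 (l₁ l₂ : LGraph n) (i j k : Fin (n+1)) (hij : i < j) (hjk : j < k) :
      BStep (l₁ ++ (i, j) :: (j, k) :: l₂) (l₁ ++ (j, k) :: (i, k) :: l₂)
  | r3 (l₁ l₂ : LGraph n) (i j k : Fin (n+1)) (hij : i < j) (hjk : j < k) :
      BStep (l₁ ++ (i, j) :: (j, k) :: l₂) (l₁ ++ (i, k) :: l₂)

/-- Conditions (i), (ii), (iii) of a good labeling. -/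
def GoodLabels {n : ℕ} (L : LGraph n) : Prop :=
  (∀ (a b : Fin L.length) (i j k : Fin (n+1)), i < j → j < k →
      L.get a = (i, j) → L.get b = (j, k) → (a : ℕ) < b) ∧
  (∀ (a b : Fin L.length) (i j k : Fin (n+1)), j < k →
      L.get a = (i, j) → L.get b = (i, k) → (b : ℕ) < a) ∧
  (∀ (a b : Fin L.length) (i j k : Fin (n+1)), i < k →
      L.get a = (i, j) → L.get b = (k, j) → (b : ℕ) < a)

/-- A good edge-labeled forest. -/
def GoodForest {n : ℕ} (L : LGraph n) : Prop :=
  LIsGraph L ∧ Acyclic L.toFinset ∧ Noncrossing L.toFinset ∧ GoodLabels L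

/-- A labeled graph contains edges `(i,j)_c`, `(j,k)_{c+1}` with `i < j < k`. -/
def HasRedex {n : ℕ} (L : LGraph n) : Prop :=
  ∃ (l₁ l₂ : LGraph n) (i j k : Fin (n+1)),
    i < j ∧ j < k ∧ L = l₁ ++ (i, j) :: (j, k) :: l₂

/-- Finite ternary trees with nodes labeled by edge-labeled graphs. -/
inductive BRTree (n : ℕ) : Type
  | leaf : LGraph n → BRTree n
  | node : LGraph n → BRTree n → BRTree n → BRTree n → BRTree n

namespace BRTree

def root {n : ℕ} : BRTree n → LGraph n
  | leaf L => L
  | node L _ _ _ => L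

/-- A B-reduction tree: each internal node's children are the three results of a
B-reduction applied after finitely many label swaps; no leaf admits a B-reduction,
even after finitely many label swaps. -/
def Valid {n : ℕ} : BRTree n → Prop
  | leaf L => ¬ ∃ L', Relation.ReflTransGen SwapStep L L' ∧ HasRedex L'
  | node L t1 t2 t3 =>
      (∃ (l₁ l₂ : LGraph n) (i j k : Fin (n+1)), i < j ∧ j < k ∧
        Relation.ReflTransGen SwapStep L (l₁ ++ (i, j) :: (j, k) :: l₂) ∧
        t1.root = l₁ ++ (i, k) :: (i, j) :: l₂ ∧
        t2.root = l₁ ++ (j, k) :: (i, k) :: l₂ ∧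
        t3.root = l₁ ++ (i, k) :: l₂) ∧
      t1.Valid ∧ t2.Valid ∧ t3.Valid

def leaves {n : ℕ} : BRTree n → List (LGraph n)
  | leaf L => [L]
  | node _ t1 t2 t3 => t1.leaves ++ t2.leaves ++ t3.leaves

end BRTree

/-- The path `1 - 2 - ⋯ - (n+1)` with edge `(i, i+1)` labeled `i`. -/
def pathGraph (n : ℕ) : LGraph n := List.ofFn (fun i : Fin n => (i.castSucc, i.succ))

/-- `e` is lexicographically smaller than `f`: `e.2 > f.2`, or `e.2 = f.2` and `e.1 > f.1`. -/
def lexLess {n : ℕ} (e f : Edge n) : Prop :=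
  f.2 < e.2 ∨ (e.2 = f.2 ∧ f.1 < e.1)

/-- The labeling is lexicographic: smaller labels go to lexicographically smaller edges. -/
def IsLexLabeled {n : ℕ} (L : LGraph n) : Prop :=
  ∀ a b : Fin L.length, (a : ℕ) < b → lexLess (L.get a) (L.get b)

/-! Helper material. -/

section Aux

variable {n : ℕ}

def wv (e : Edge n) : Fin (n+1) → ℤ := Pi.single e.1 1 - Pi.single e.2 1

def Indp (S : EdgeSet n) : Prop :=
  ∀ c : Edge n → ℤ, ∑ e ∈ S, c e • wv e = 0 → ∀ e ∈ S, c e = 0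

def PC (S : EdgeSet n) (v : Fin (n+1) → ℤ) : Prop :=
  ∃ c : Edge n → ℤ, (∀ e ∈ S, 0 < c e) ∧ ∑ e ∈ S, c e • wv e = v

lemma sum_upd (S : EdgeSet n) (a : Edge n) (ha : a ∉ S) (c : Edge n → ℤ) (x : ℤ) :
    ∑ e ∈ insert a S, (Function.update c a x) e • wv e = x • wv a + ∑ e ∈ S, c e • wv e := by
  rw [Finset.sum_insert ha]
  congr 1
  · simp
  · apply Finset.sum_congr rfl
    intro e he
    rw [Function.update_of_ne]
    rintro rfl; exact ha he

lemma PC_ins (S : EdgeSet n) (a : Edge n) (ha : a ∉ S) (v : Fin (n+1) → ℤ) :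
    PC (insert a S) v ↔ ∃ x : ℤ, 0 < x ∧ PC S (v - x • wv a) := by
  constructor
  · rintro ⟨c, hc, hs⟩
    refine ⟨c a, hc a (by simp), c, fun e he => hc e (by simp [he]), ?_⟩
    rw [Finset.sum_insert ha] at hs
    rw [← hs]; abel
  · rintro ⟨x, hx, c, hc, hs⟩
    refine ⟨Function.update c a x, ?_, ?_⟩
    · intro e he
      by_cases h : e = a
      · subst h; simpa
      · rw [Function.update_of_ne h]; exact hc e (by simpa [h] using he)
    · rw [sum_upd _ _ ha, hs]; abel

/-- membership in the integer span -/
def Spn (S : EdgeSet n) (v : Fin (n+1) → ℤ) : Prop :=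
  ∃ c : Edge n → ℤ, ∑ e ∈ S, c e • wv e = v

lemma PC.spn {S : EdgeSet n} {v} (h : PC S v) : Spn S v := by
  obtain ⟨c, _, h⟩ := h; exact ⟨c, h⟩

lemma Spn.sub {S : EdgeSet n} {v u} (h : Spn S v) (h' : Spn S u) : Spn S (v - u) := by
  obtain ⟨c, h⟩ := h
  obtain ⟨d, h'⟩ := h'
  exact ⟨c - d, by simp only [Pi.sub_apply, sub_smul, Finset.sum_sub_distrib, h, h']⟩

lemma Spn.add {S : EdgeSet n} {v u} (h : Spn S v) (h' : Spn S u) : Spn S (v + u) := by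
  obtain ⟨c, h⟩ := h
  obtain ⟨d, h'⟩ := h'
  exact ⟨c + d, by simp only [Pi.add_apply, add_smul, Finset.sum_add_distrib, h, h']⟩

lemma Spn.zero {S : EdgeSet n} : Spn S 0 := ⟨0, by simp⟩

lemma Spn.mem {S : EdgeSet n} {a} (h : a ∈ S) : Spn S (wv a) := by
  refine ⟨Pi.single a 1, ?_⟩
  rw [Finset.sum_eq_single a]
  · simp
  · intro b _ hb; simp [hb]
  · intro h'; exact absurd h h'

lemma Indp_ins (S : EdgeSet n) (a : Edge n) (ha : a ∉ S) :
    Indp (insert a S) ↔ Indp S ∧ ∀ x : ℤ, Spn S (x • wv a) → x = 0 := by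
  constructor
  · intro h
    refine ⟨fun c hc e he => ?_, ?_⟩
    · have := h (Function.update c a 0) (by rw [sum_upd _ _ ha, hc]; simp) e (by simp [he])
      rwa [Function.update_of_ne (by rintro rfl; exact ha he)] at this
    · rintro x ⟨c, hc⟩
      have := h (Function.update c a (-x)) (by rw [sum_upd _ _ ha, hc]; simp) a (by simp)
      simpa using this
  · rintro ⟨h1, h2⟩ c hc
    rw [Finset.sum_insert ha] at hc
    have h0 : c a = 0 := by
      apply h2
      refine ⟨-c, ?_⟩
      simp only [Pi.neg_apply, neg_smul, Finset.sum_neg_distrib]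
      exact (eq_neg_of_add_eq_zero_left hc).symm
    intro e he
    rcases Finset.mem_insert.1 he with rfl | he
    · exact h0
    · exact h1 c (by simpa [h0] using hc) e he

lemma Spn_ins (S : EdgeSet n) (a : Edge n) (ha : a ∉ S) (v : Fin (n+1) → ℤ) :
    Spn (insert a S) v ↔ ∃ x : ℤ, Spn S (v - x • wv a) := by
  constructor
  · rintro ⟨c, hs⟩
    refine ⟨c a, c, ?_⟩
    rw [Finset.sum_insert ha] at hs
    rw [← hs]; abel
  · rintro ⟨x, c, hs⟩
    exact ⟨Function.update c a x, by rw [sum_upd _ _ ha, hs]; abel⟩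

/-- two vectors independent modulo the span of `S` -/
lemma Indp_ins2 (S : EdgeSet n) (a b : Edge n) (ha : a ∉ S) (hb : b ∉ S) (hab : a ≠ b) :
    Indp (insert a (insert b S)) ↔ Indp S ∧ ∀ x y : ℤ, Spn S (x • wv a + y • wv b) →
      x = 0 ∧ y = 0 := by
  rw [Indp_ins _ _ (by simp [ha, hab]), Indp_ins _ _ hb]
  constructor
  · rintro ⟨⟨h1, h2⟩, h3⟩
    refine ⟨h1, fun x y h => ?_⟩
    have hx : x = 0 := by
      apply h3
      rw [Spn_ins _ _ hb]
      refine ⟨-y, ?_⟩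
      convert h using 1
      simp
    subst hx
    exact ⟨rfl, h2 y (by simpa using h)⟩
  · rintro ⟨h1, h2⟩
    refine ⟨⟨h1, fun y h => (h2 0 y (by simpa using h)).2⟩, fun x h => ?_⟩
    rw [Spn_ins _ _ hb] at h
    obtain ⟨y, h⟩ := h
    refine (h2 x (-y) ?_).1
    convert h using 1
    simp [sub_eq_add_neg]

lemma PC_ins2 (S : EdgeSet n) (a b : Edge n) (ha : a ∉ S) (hb : b ∉ S) (hab : a ≠ b)
    (v : Fin (n+1) → ℤ) :
    PC (insert a (insert b S)) v ↔ ∃ x y : ℤ, 0 < x ∧ 0 < y ∧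
      PC S (v - (x • wv a + y • wv b)) := by
  rw [PC_ins _ _ (by simp [ha, hab])]
  constructor
  · rintro ⟨x, hx, h⟩
    rw [PC_ins _ _ hb] at h
    obtain ⟨y, hy, h⟩ := h
    exact ⟨x, y, hx, hy, by rwa [← sub_sub]⟩
  · rintro ⟨x, y, hx, hy, h⟩
    refine ⟨x, hx, ?_⟩
    rw [PC_ins _ _ hb]
    exact ⟨y, hy, by rwa [sub_sub]⟩

lemma reduce_notMem (S : EdgeSet n) (p q r : Edge n) (hp : p ∉ S) (hq : q ∉ S) (hpq : p ≠ q)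
    (hw : wv r = wv p + wv q)
    (hI : Indp (insert p (insert q S))) : r ∉ S := by
  intro hr
  rw [Indp_ins2 _ _ _ hp hq hpq] at hI
  have := (hI.2 1 1 (by simpa [← hw] using Spn.mem hr)).1
  omega

lemma reduce_indp (S : EdgeSet n) (p q r : Edge n) (hp : p ∉ S) (hq : q ∉ S) (hpq : p ≠ q)
    (hrp : r ≠ p) (hrq : r ≠ q) (hw : wv r = wv p + wv q)
    (hI : Indp (insert p (insert q S))) :
    Indp (insert r (insert p S)) ∧ Indp (insert q (insert r S)) ∧ Indp (insert r S) := by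
  have hr := reduce_notMem S p q r hp hq hpq hw hI
  rw [Indp_ins2 _ _ _ hp hq hpq] at hI
  rw [Indp_ins2 _ _ _ hr hp hrp, Indp_ins2 _ _ _ hq hr hrq.symm, Indp_ins _ _ hr]
  obtain ⟨h1, h2⟩ := hI
  refine ⟨⟨h1, fun x y h => ?_⟩, ⟨h1, fun x y h => ?_⟩, h1, fun x h => ?_⟩
  · have := h2 (x + y) x (by convert h using 1; rw [hw, add_smul, smul_add]; abel)
    omega
  · have := h2 y (x + y) (by convert h using 1; rw [hw, add_smul, smul_add]; abel)
    omega
  · have := h2 x x (by convert h using 1; rw [hw, smul_add])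
    omega

lemma reduce_PC (S : EdgeSet n) (p q r : Edge n) (hp : p ∉ S) (hq : q ∉ S) (hpq : p ≠ q)
    (hrp : r ≠ p) (hrq : r ≠ q) (hw : wv r = wv p + wv q)
    (hI : Indp (insert p (insert q S))) (v : Fin (n+1) → ℤ) :
    (PC (insert p (insert q S)) v ↔
      (PC (insert r (insert p S)) v ∨ PC (insert q (insert r S)) v ∨ PC (insert r S) v)) ∧
    ¬ (PC (insert r (insert p S)) v ∧ PC (insert q (insert r S)) v) ∧
    ¬ (PC (insert r (insert p S)) v ∧ PC (insert r S) v) ∧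
    ¬ (PC (insert q (insert r S)) v ∧ PC (insert r S) v) := by
  have hr := reduce_notMem S p q r hp hq hpq hw hI
  rw [Indp_ins2 _ _ _ hp hq hpq] at hI
  obtain ⟨-, h2⟩ := hI
  have e1 : PC (insert r (insert p S)) v ↔ ∃ x y : ℤ, 0 < y ∧ y < x ∧
      PC S (v - (x • wv p + y • wv q)) := by
    rw [PC_ins2 _ _ _ hr hp hrp]
    constructor
    · rintro ⟨x, y, hx, hy, h⟩
      refine ⟨x + y, x, hx, by omega, ?_⟩
      convert h using 2; rw [hw, add_smul, smul_add]; abel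
    · rintro ⟨x, y, hx, hy, h⟩
      refine ⟨y, x - y, hx, by omega, ?_⟩
      convert h using 2; rw [hw, sub_smul, smul_add]; abel
  have e2 : PC (insert q (insert r S)) v ↔ ∃ x y : ℤ, 0 < x ∧ x < y ∧
      PC S (v - (x • wv p + y • wv q)) := by
    rw [PC_ins2 _ _ _ hq hr hrq.symm]
    constructor
    · rintro ⟨x, y, hx, hy, h⟩
      refine ⟨y, x + y, hy, by omega, ?_⟩
      convert h using 2; rw [hw, add_smul, smul_add]; abel
    · rintro ⟨x, y, hx, hy, h⟩
      refine ⟨y - x, x, by omega, by omega, ?_⟩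
      convert h using 2; rw [hw, sub_smul, smul_add]; abel
  have e3 : PC (insert r S) v ↔ ∃ x y : ℤ, 0 < x ∧ x = y ∧
      PC S (v - (x • wv p + y • wv q)) := by
    rw [PC_ins _ _ hr]
    constructor
    · rintro ⟨x, hx, h⟩
      exact ⟨x, x, hx, rfl, by rwa [← smul_add, ← hw]⟩
    · rintro ⟨x, y, hx, rfl, h⟩
      exact ⟨x, hx, by rwa [← smul_add, ← hw] at h⟩
  have key : ∀ x y x' y' : ℤ, PC S (v - (x • wv p + y • wv q)) →
      PC S (v - (x' • wv p + y' • wv q)) → x = x' ∧ y = y' := by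
    intro x y x' y' h h'
    have := h2 (x - x') (y - y') (by
      convert h'.spn.sub h.spn using 1
      rw [sub_smul, sub_smul]; abel)
    omega
  rw [e1, e2, e3, PC_ins2 _ _ _ hp hq hpq]
  refine ⟨⟨?_, ?_⟩, ?_, ?_, ?_⟩
  · rintro ⟨x, y, hx, hy, h⟩
    rcases lt_trichotomy x y with h' | h' | h'
    · exact Or.inr (Or.inl ⟨x, y, hx, h', h⟩)
    · exact Or.inr (Or.inr ⟨x, y, hx, h', h⟩)
    · exact Or.inl ⟨x, y, hy, h', h⟩
  · rintro (⟨x, y, h1, h2, h⟩ | ⟨x, y, h1, h2, h⟩ | ⟨x, y, h1, h2, h⟩) <;>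
      exact ⟨x, y, by omega, by omega, h⟩
  all_goals
    rintro ⟨⟨x, y, h1, h2, h⟩, ⟨x', y', h1', h2', h'⟩⟩
    have := key _ _ _ _ h h'
    omega

lemma wv_add (i j k : Fin (n+1)) : wv (i, k) = wv (i, j) + wv (j, k) := by
  simp [wv]

/-- `e` may come before `f`. -/
def okp (e f : Edge n) : Prop :=
  e.1 ≠ f.2 ∧ (e.1 = f.1 → f.2 < e.2) ∧ (e.2 = f.2 → f.1 < e.1)

structure Inv (L : LGraph n) : Prop where
  ok : L.Pairwise okp
  inc : ∀ e ∈ L, e.1 < e.2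
  nc : ∀ e ∈ L, ∀ f ∈ L, ¬ (e.1 < f.1 ∧ f.1 < e.2 ∧ e.2 < f.2)
  ind : Indp L.toFinset

lemma okp_irr (L : LGraph n) (h : L.Pairwise okp) : L.Nodup :=
  h.imp (fun {a b} hab => by
    rintro rfl; exact absurd (hab.2.1 rfl) (lt_irrefl _))

lemma swap_toFinset {L L' : LGraph n} (h : SwapStep L L') : L'.toFinset = L.toFinset := by
  obtain ⟨l₁, l₂, e, f, hd⟩ := h
  ext x; simp; tauto

lemma Inv.swap {L L' : LGraph n} (h : SwapStep L L') (hI : Inv L) : Inv L' := by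
  have ht := swap_toFinset h
  have hm : ∀ x, x ∈ L' ↔ x ∈ L := fun x => by
    rw [← List.mem_toFinset, ht, List.mem_toFinset]
  refine ⟨?_, fun e he => hI.inc e ((hm e).1 he), fun e he f hf =>
    hI.nc e ((hm e).1 he) f ((hm f).1 hf), ht ▸ hI.ind⟩
  have := hI.ok
  obtain ⟨l₁, l₂, e, f, hd⟩ := h
  simp only [List.pairwise_append, List.pairwise_cons, List.mem_cons] at this ⊢
  obtain ⟨h1, ⟨h2, h3, h4⟩, h5⟩ := this
  refine ⟨h1, ⟨?_, ?_, h4⟩, ?_⟩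
  · rintro x (rfl | hx)
    · obtain ⟨a, b, c, d⟩ := hd
      exact ⟨fun h => c h.symm, fun h => absurd h.symm a, fun h => absurd h.symm d⟩
    · exact h3 x hx
  · intro x hx; exact h2 x (Or.inr hx)
  · intro a ha b hb; exact h5 a ha b (by tauto)

lemma swaps_inv {L L' : LGraph n} (h : Relation.ReflTransGen SwapStep L L') (hI : Inv L) :
    Inv L' ∧ L'.toFinset = L.toFinset := by
  induction h with
  | refl => exact ⟨hI, rfl⟩
  | tail _ h ih => exact ⟨ih.1.swap h, (swap_toFinset h).trans ih.2⟩

lemma reduce_all (l₁ l₂ : LGraph n) (i j k : Fin (n+1)) (hij : i < j) (hjk : j < k)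
    (hI : Inv (l₁ ++ (i, j) :: (j, k) :: l₂)) :
    ∃ S : EdgeSet n, (i, j) ∉ S ∧ (j, k) ∉ S ∧ (i, k) ∉ S ∧ S = (l₁ ++ l₂).toFinset ∧
    (l₁ ++ (i, j) :: (j, k) :: l₂).toFinset = insert (i, j) (insert (j, k) S) ∧
    (l₁ ++ (i, k) :: (i, j) :: l₂).toFinset = insert (i, k) (insert (i, j) S) ∧
    (l₁ ++ (j, k) :: (i, k) :: l₂).toFinset = insert (j, k) (insert (i, k) S) ∧
    (l₁ ++ (i, k) :: l₂).toFinset = insert (i, k) S ∧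
    Inv (l₁ ++ (i, k) :: (i, j) :: l₂) ∧ Inv (l₁ ++ (j, k) :: (i, k) :: l₂) ∧
    Inv (l₁ ++ (i, k) :: l₂) := by
  have e0 : (l₁ ++ (i, j) :: (j, k) :: l₂).toFinset
      = insert (i, j) (insert (j, k) (l₁ ++ l₂).toFinset) := by ext x; simp
  have e1 : (l₁ ++ (i, k) :: (i, j) :: l₂).toFinset
      = insert (i, k) (insert (i, j) (l₁ ++ l₂).toFinset) := by ext x; simp
  have e2 : (l₁ ++ (j, k) :: (i, k) :: l₂).toFinset
      = insert (j, k) (insert (i, k) (l₁ ++ l₂).toFinset) := by ext x; simp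
  have e3 : (l₁ ++ (i, k) :: l₂).toFinset
      = insert (i, k) (l₁ ++ l₂).toFinset := by ext x; simp
  obtain ⟨hok, hinc, hnc, hind⟩ := hI
  have hnd := okp_irr _ hok
  have hp : (i, j) ∉ (l₁ ++ l₂).toFinset := by
    simp [List.nodup_append] at hnd ⊢; grind
  have hq : (j, k) ∉ (l₁ ++ l₂).toFinset := by
    simp [List.nodup_append] at hnd ⊢; grind
  have hpq : (i, j) ≠ (j, k) := by simp; intro h; omega
  have hrp : (i, k) ≠ (i, j) := by simp; omega
  have hrq : (i, k) ≠ (j, k) := by simp; omega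
  rw [e0] at hind
  have hr := reduce_notMem _ _ _ _ hp hq hpq (wv_add i j k) hind
  obtain ⟨i1, i2, i3⟩ := reduce_indp _ _ _ _ hp hq hpq hrp hrq (wv_add i j k) hind
  refine ⟨_, hp, hq, hr, rfl, e0, e1, e2, e3, ?_⟩
  simp only [List.mem_toFinset, List.mem_append, not_or] at hr
  simp only [List.pairwise_append, List.pairwise_cons] at hok
  obtain ⟨o1, ⟨o23, o4, o5⟩, o678⟩ := hok
  have o3 : ∀ e ∈ l₂, okp (i, j) e := fun e he => o23 e (by simp [he])
  have o6 : ∀ e ∈ l₁, okp e (i, j) := fun e he => o678 e he _ (by simp)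
  have o7 : ∀ e ∈ l₁, okp e (j, k) := fun e he => o678 e he _ (by simp)
  have o8 : ∀ e ∈ l₁, ∀ f ∈ l₂, okp e f := fun e he f hf => o678 e he f (by simp [hf])
  have m1 : ∀ e ∈ l₁, e ∈ l₁ ++ (i, j) :: (j, k) :: l₂ := fun e he => by simp [he]
  have m2 : ∀ e ∈ l₂, e ∈ l₁ ++ (i, j) :: (j, k) :: l₂ := fun e he => by simp [he]
  have mp : (i, j) ∈ l₁ ++ (i, j) :: (j, k) :: l₂ := by simp
  have mq : (j, k) ∈ l₁ ++ (i, j) :: (j, k) :: l₂ := by simp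
  have A : ∀ e ∈ l₁, okp e (i, k) := by
    intro e he
    have a1 := o6 e he
    have a2 := o7 e he
    have a4 : ¬ (e.1 = i ∧ e.2 = k) := by
      rintro ⟨rfl, rfl⟩; exact hr.1 he
    have a5 := hnc e (m1 e he) _ mq
    clear * - a1 a2 a4 a5 hij hjk
    obtain ⟨x, y⟩ := e
    simp only [okp] at *
    omega
  have B : ∀ e ∈ l₂, okp (i, k) e := by
    intro e he
    have a1 := o3 e he
    have a2 := o4 e he
    have a4 : ¬ (e.1 = i ∧ e.2 = k) := by
      rintro ⟨rfl, rfl⟩; exact hr.2 he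
    have a5 := hnc _ mp e (m2 e he)
    clear * - a1 a2 a4 a5 hij hjk
    obtain ⟨x, y⟩ := e
    simp only [okp] at *
    omega
  have C : ∀ e ∈ l₁ ++ (i, j) :: (j, k) :: l₂, ¬ (e.1 < i ∧ i < e.2 ∧ e.2 < k) ∧
      ¬ (i < e.1 ∧ e.1 < k ∧ k < e.2) := by
    intro e he
    have b1 := hnc e he _ mp
    have b2 := hnc e he _ mq
    have b3 := hnc _ mp e he
    have b4 := hnc _ mq e he
    have he' : okp e (i, j) ∨ okp (j, k) e ∨ e = (i, j) ∨ e = (j, k) := by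
      simp only [List.mem_append, List.mem_cons] at he
      rcases he with h | h | h | h
      · exact Or.inl (o6 e h)
      · simp [h]
      · simp [h]
      · exact Or.inr (Or.inl (o4 e h))
    clear * - he' b1 b2 b3 b4 hij hjk
    obtain ⟨x, y⟩ := e
    simp only [okp, Prod.mk.injEq] at *
    omega
  have P1 : okp (i, k) (i, j) := by simp only [okp]; omega
  have P2 : okp (j, k) (i, k) := by simp only [okp]; omega
  have fin : ∀ L' : LGraph n, (∀ e ∈ L', e = (i, k) ∨ e ∈ l₁ ++ (i, j) :: (j, k) :: l₂) →
      (∀ e ∈ L', e.1 < e.2) ∧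
      (∀ e ∈ L', ∀ f ∈ L', ¬ (e.1 < f.1 ∧ f.1 < e.2 ∧ e.2 < f.2)) := by
    intro L' hL
    constructor
    · intro e he
      rcases hL e he with rfl | h
      · exact hij.trans hjk
      · exact hinc e h
    · intro e he f hf
      rcases hL e he with rfl | h <;> rcases hL f hf with rfl | h'
      · simp
      · exact (C f h').2
      · exact (C e h).1
      · exact hnc e h f h'
  have f1 := fin (l₁ ++ (i, k) :: (i, j) :: l₂) (fun e he => by simp at he ⊢; tauto)
  have f2 := fin (l₁ ++ (j, k) :: (i, k) :: l₂) (fun e he => by simp at he ⊢; tauto)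
  have f3 := fin (l₁ ++ (i, k) :: l₂) (fun e he => by simp at he ⊢; tauto)
  refine ⟨⟨?_, f1.1, f1.2, e1 ▸ i1⟩, ⟨?_, f2.1, f2.2, e2 ▸ i2⟩, ⟨?_, f3.1, f3.2, e3 ▸ i3⟩⟩
  · simp only [List.pairwise_append, List.pairwise_cons]
    refine ⟨o1, ⟨?_, o3, o5⟩, ?_⟩
    · intro e he
      rcases List.mem_cons.1 he with rfl | he
      exacts [P1, B e he]
    · intro e he f hf
      rcases List.mem_cons.1 hf with rfl | hf
      · exact A e he
      rcases List.mem_cons.1 hf with rfl | hf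
      exacts [o6 e he, o8 e he f hf]
  · simp only [List.pairwise_append, List.pairwise_cons]
    refine ⟨o1, ⟨?_, B, o5⟩, ?_⟩
    · intro e he
      rcases List.mem_cons.1 he with rfl | he
      exacts [P2, o4 e he]
    · intro e he f hf
      rcases List.mem_cons.1 hf with rfl | hf
      · exact o7 e he
      rcases List.mem_cons.1 hf with rfl | hf
      exacts [A e he, o8 e he f hf]
  · simp only [List.pairwise_append, List.pairwise_cons]
    refine ⟨o1, ⟨B, o5⟩, ?_⟩
    · intro e he f hf
      rcases List.mem_cons.1 hf with rfl | hf
      exacts [A e he, o8 e he f hf]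

lemma swaps_append (l₁ l₂ : LGraph n) {L L' : LGraph n}
    (h : Relation.ReflTransGen SwapStep L L') :
    Relation.ReflTransGen SwapStep (l₁ ++ L ++ l₂) (l₁ ++ L' ++ l₂) := by
  induction h with
  | refl => exact .refl
  | tail _ h ih =>
    refine ih.tail ?_
    obtain ⟨a, b, e, f, hd⟩ := h
    have := SwapStep.mk (l₁ ++ a) (b ++ l₂) e f hd
    simpa using this

def Rch (L : LGraph n) : Prop :=
  ∃ L', Relation.ReflTransGen SwapStep L L' ∧ HasRedex L'

lemma Rch.append {L : LGraph n} (h : Rch L) (l₂ : LGraph n) : Rch (L ++ l₂) := by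
  obtain ⟨L', h, a, b, i, j, k, hij, hjk, rfl⟩ := h
  refine ⟨_, by simpa using swaps_append [] l₂ h, a, b ++ l₂, i, j, k, hij, hjk, by simp⟩

lemma Rch.of_swaps {L L' : LGraph n} (h : Relation.ReflTransGen SwapStep L L')
    (h' : Rch L') : Rch L := by
  obtain ⟨L'', h1, h2⟩ := h'
  exact ⟨L'', h.trans h1, h2⟩

def dl (e f : Edge n) : Prop := vDisj e f ∨ lexLess e f

lemma lexLess_trans {e f g : Edge n} (h : lexLess e f) (h' : lexLess f g) : lexLess e g := by
  simp only [lexLess] at *; omega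

lemma insert_sort (e : Edge n) (l : LGraph n) (hl : l.Pairwise lexLess)
    (h : ∀ f ∈ l, dl e f) (hne : e ∉ l) :
    ∃ l', Relation.ReflTransGen SwapStep (e :: l) l' ∧ l'.Pairwise lexLess ∧
      ∀ x, x ∈ l' ↔ x = e ∨ x ∈ l := by
  induction l with
  | nil => exact ⟨[e], .refl, by simp, by simp⟩
  | cons f l ih =>
    rw [List.pairwise_cons] at hl
    by_cases hef : lexLess e f
    · refine ⟨e :: f :: l, .refl, ?_, by simp⟩
      rw [List.pairwise_cons]
      refine ⟨?_, List.pairwise_cons.2 hl⟩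
      intro x hx
      rcases List.mem_cons.1 hx with rfl | hx
      · exact hef
      · exact lexLess_trans hef (hl.1 x hx)
    · have hd : vDisj e f := (h f (by simp)).resolve_right hef
      obtain ⟨l', h1, h2, h3⟩ := ih hl.2 (fun g hg => h g (by simp [hg])) (by
        intro h; exact hne (by simp [h]))
      refine ⟨f :: l', ?_, ?_, ?_⟩
      · refine Relation.ReflTransGen.head (SwapStep.mk [] l e f hd) ?_
        simpa using swaps_append [f] [] h1
      · rw [List.pairwise_cons]
        refine ⟨?_, h2⟩
        intro x hx
        rcases (h3 x).1 hx with rfl | hx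
        · obtain ⟨_, _, _, h4⟩ := hd
          simp only [lexLess] at *; omega
        · exact hl.1 x hx
      · intro x; simp [h3]; tauto

lemma sortable (L : LGraph n) (hL : L.Pairwise dl) (hn : L.Nodup) :
    ∃ L', Relation.ReflTransGen SwapStep L L' ∧ L'.Pairwise lexLess ∧ ∀ x, x ∈ L' ↔ x ∈ L := by
  induction L with
  | nil => exact ⟨[], .refl, by simp, by simp⟩
  | cons e l ih =>
    rw [List.pairwise_cons] at hL
    rw [List.nodup_cons] at hn
    obtain ⟨l', h1, h2, h3⟩ := ih hL.2 hn.2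
    obtain ⟨l'', h4, h5, h6⟩ := insert_sort e l' h2 (fun f hf => hL.1 f ((h3 f).1 hf))
      (by rw [h3]; exact hn.1)
    refine ⟨l'', ?_, h5, fun x => by rw [h6, h3]; simp⟩
    refine Relation.ReflTransGen.trans ?_ h4
    simpa using swaps_append [e] [] h1

lemma redex_of_sorted (f : Edge n) (hf : f.1 < f.2) (l : LGraph n) (hl : l.Pairwise lexLess)
    (hinc : ∀ e ∈ l, e.1 < e.2) (hex : ∃ e ∈ l, e.2 = f.1) : Rch (l ++ [f]) := by
  induction l using List.reverseRecOn with
  | nil => simp at hex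
  | append_singleton q b ih =>
    by_cases hb : b.2 = f.1
    · refine ⟨_, .refl, q, [], b.1, b.2, f.2, hinc b (by simp), by rw [hb]; exact hf, ?_⟩
      simp [hb, Prod.ext_iff]
    · rw [List.pairwise_append] at hl
      obtain ⟨e, he, hef⟩ := hex
      have heq : e ∈ q := by
        rcases List.mem_append.1 he with h | h
        · exact h
        · simp at h; subst h; exact absurd hef hb
      have hlt := hl.2.2 e heq b (by simp)
      have hbi := hinc b (by simp)
      have hd : vDisj b f := by
        simp only [vDisj, lexLess] at *; omega
      have := ih hl.1 (fun e he => hinc e (by simp [he])) ⟨e, heq, hef⟩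
      refine Rch.of_swaps ?_ (this.append [b])
      have := SwapStep.mk q [] b f hd
      simpa using Relation.ReflTransGen.single this

lemma dl_or_rch (L : LGraph n) (hok : L.Pairwise okp) (hinc : ∀ e ∈ L, e.1 < e.2) :
    L.Pairwise dl ∨ Rch L := by
  induction L using List.reverseRecOn with
  | nil => simp
  | append_singleton q f ih =>
    have hok' := List.pairwise_append.1 hok
    have hinc' : ∀ e ∈ q, e.1 < e.2 := fun e he => hinc e (by simp [he])
    have hf := hinc f (by simp)
    rcases ih hok'.1 hinc' with h | h
    · by_cases hex : ∃ e ∈ q, e.2 = f.1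
      · right
        obtain ⟨l, h1, h2, h3⟩ := sortable q h (okp_irr _ hok'.1)
        refine Rch.of_swaps (by simpa using swaps_append [] [f] h1) ?_
        refine redex_of_sorted f hf l h2 (fun e he => hinc' e ((h3 e).1 he)) ?_
        obtain ⟨e, he, h⟩ := hex
        exact ⟨e, (h3 e).2 he, h⟩
      · left
        rw [List.pairwise_append]
        refine ⟨h, by simp, ?_⟩
        intro e he g hg
        simp at hg; subst hg
        have h1 := hok'.2.2 e he g (by simp)
        have h2 : e.2 ≠ g.1 := fun h => hex ⟨e, he, h⟩
        simp only [okp, dl, vDisj, lexLess] at *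
        omega
    · exact Or.inr (h.append _)

lemma leaf_props (L : LGraph n) (hI : Inv L) (h : ¬ Rch L) :
    Alternating L.toFinset ∧
    ∃ L', Relation.ReflTransGen SwapStep L L' ∧ IsLexLabeled L' := by
  have hd := (dl_or_rch L hI.ok hI.inc).resolve_right h
  constructor
  · rintro ⟨i, j, k, hij, hjk, h1, h2⟩
    rw [List.mem_toFinset] at h1 h2
    have : L.Pairwise (fun e f => okp e f ∧ dl e f) := hI.ok.and hd
    obtain ⟨a, ha, ha'⟩ := List.getElem_of_mem h1
    obtain ⟨b, hb, hb'⟩ := List.getElem_of_mem h2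
    rw [List.pairwise_iff_getElem] at this
    rcases lt_trichotomy a b with hab | hab | hab
    · have := this a b ha hb hab
      rw [ha', hb'] at this
      simp only [okp, dl, vDisj, lexLess] at this
      omega
    · subst hab
      rw [ha'] at hb'
      simp at hb'; omega
    · have := this b a hb ha hab
      rw [ha', hb'] at this
      simp only [okp, dl, vDisj, lexLess] at this
      omega
  · obtain ⟨L', h1, h2, _⟩ := sortable L hd (okp_irr _ hI.ok)
    refine ⟨L', h1, ?_⟩
    intro a b hab
    rw [List.pairwise_iff_getElem] at h2
    exact h2 a b a.2 b.2 hab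

lemma tree_main (R : BRTree n) (hR : R.Valid) (hI : Inv R.root) :
    (∀ L ∈ R.leaves, Inv L ∧ ¬ Rch L) ∧
    (∀ v, PC R.root.toFinset v ↔ ∃ L ∈ R.leaves, PC L.toFinset v) ∧
    (R.leaves.Pairwise fun L L' => ∀ v, ¬ (PC L.toFinset v ∧ PC L'.toFinset v)) := by
  induction R with
  | leaf L =>
    simp only [BRTree.leaves, BRTree.root, BRTree.Valid] at *
    exact ⟨by simpa using ⟨hI, hR⟩, by simp, by simp⟩
  | node L t1 t2 t3 ih1 ih2 ih3 =>
    change Inv L at hI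
    rw [BRTree.Valid] at hR
    obtain ⟨⟨l₁, l₂, i, j, k, hij, hjk, hsw, r1, r2, r3⟩, v1, v2, v3⟩ := hR
    obtain ⟨hI', ht⟩ := swaps_inv hsw hI
    obtain ⟨S, hp, hq, hr, -, s0, s1, s2, s3, I1, I2, I3⟩ := reduce_all l₁ l₂ i j k hij hjk hI'
    have key := reduce_PC S (i, j) (j, k) (i, k) hp hq (by simp; omega) (by simp; omega)
      (by simp; omega) (wv_add i j k) (s0 ▸ hI'.ind)
    rw [← s0, ← s1, ← s2, ← s3, ht, ← r1, ← r2, ← r3] at key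
    rw [← r1] at I1
    rw [← r2] at I2
    rw [← r3] at I3
    obtain ⟨a1, b1, c1⟩ := ih1 v1 I1
    obtain ⟨a2, b2, c2⟩ := ih2 v2 I2
    obtain ⟨a3, b3, c3⟩ := ih3 v3 I3
    simp only [BRTree.leaves]
    change _ ∧ (∀ v, PC L.toFinset v ↔ _) ∧ _
    refine ⟨?_, ?_, ?_⟩
    · intro L hL
      simp only [List.mem_append] at hL
      rcases hL with (h | h) | h
      exacts [a1 L h, a2 L h, a3 L h]
    · intro v
      rw [(key v).1, b1, b2, b3]
      simp only [List.mem_append, or_and_right, exists_or, or_assoc]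
    · rw [List.pairwise_append, List.pairwise_append]
      refine ⟨⟨c1, c2, ?_⟩, c3, ?_⟩
      · intro A hA B hB v ⟨h1, h2⟩
        exact (key v).2.1 ⟨(b1 v).2 ⟨A, hA, h1⟩, (b2 v).2 ⟨B, hB, h2⟩⟩
      · intro A hA B hB v ⟨h1, h2⟩
        rcases List.mem_append.1 hA with hA | hA
        · exact (key v).2.2.1 ⟨(b1 v).2 ⟨A, hA, h1⟩, (b3 v).2 ⟨B, hB, h2⟩⟩
        · exact (key v).2.2.2 ⟨(b2 v).2 ⟨A, hA, h1⟩, (b3 v).2 ⟨B, hB, h2⟩⟩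

lemma unique_nc (c d : Fin (n+1) → Fin (n+1) → ℤ) (hc : ∀ i j, 0 ≤ c i j) (hd : ∀ i j, 0 ≤ d i j)
    (ic : ∀ i j, 0 < c i j → i < j) (id : ∀ i j, 0 < d i j → i < j)
    (nc : ∀ i j k l, i < j → j < k → k < l → 0 < c i k → 0 < c j l → False)
    (nd : ∀ i j k l, i < j → j < k → k < l → 0 < d i k → 0 < d j l → False)
    (hrow : ∀ i, ∑ j, c i j = ∑ j, d i j) (hcol : ∀ j, ∑ i, c i j = ∑ i, d i j) :
    ∀ m : ℕ, ∀ i j : Fin (n+1), (j : ℕ) - i = m → c i j = d i j := by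
  intro m
  induction m using Nat.strong_induction_on with
  | _ m IH =>
    have main : ∀ (c d : Fin (n+1) → Fin (n+1) → ℤ), (∀ i j, 0 ≤ c i j) → (∀ i j, 0 ≤ d i j) →
        (∀ i j, 0 < c i j → i < j) → (∀ i j, 0 < d i j → i < j) →
        (∀ i j k l, i < j → j < k → k < l → 0 < c i k → 0 < c j l → False) →
        (∀ i, ∑ j, c i j = ∑ j, d i j) → (∀ j, ∑ i, c i j = ∑ i, d i j) →
        (∀ i j : Fin (n+1), (j : ℕ) - i < m → c i j = d i j) →
        ∀ i j : Fin (n+1), (j : ℕ) - i = m → ¬ c i j < d i j := by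
      intro c d hc hd ic id nc hrow hcol IH i j hm hlt
      have hij : i < j := id i j (lt_of_le_of_lt (hc i j) hlt)
      have z : ∀ i j : Fin (n+1), j ≤ i → c i j = d i j := by
        intro i j h
        have h1 := hc i j
        have h2 := hd i j
        have h3 := ic i j
        have h4 := id i j
        omega
      have r : ∃ l, d i l < c i l := by
        by_contra hcon
        push Not at hcon
        exact absurd (hrow i) (ne_of_lt (Finset.sum_lt_sum (fun l _ => hcon l) ⟨j, by simp, hlt⟩))
      have s : ∃ k, d k j < c k j := by
        by_contra hcon
        push Not at hcon
        exact absurd (hcol j) (ne_of_lt (Finset.sum_lt_sum (fun l _ => hcon l) ⟨i, by simp, hlt⟩))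
      obtain ⟨l, hl⟩ := r
      obtain ⟨k, hk⟩ := s
      have hl0 : 0 < c i l := lt_of_le_of_lt (hd i l) hl
      have hk0 : 0 < c k j := lt_of_le_of_lt (hd k j) hk
      have hil := ic i l hl0
      have hkj := ic k j hk0
      have hjl : j < l := by
        by_contra hcon
        have : l ≠ j := by rintro rfl; omega
        have := IH i l (by omega)
        omega
      have hki : k < i := by
        by_contra hcon
        have : k ≠ i := by rintro rfl; omega
        have := IH k j (by omega)
        omega
      exact nc k i j l hki hij hjl hk0 hl0
    intro i j hm
    have h1 := main c d hc hd ic id nc hrow hcol (fun i j h => IH _ h i j rfl) i j hm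
    have h2 := main d c hd hc id ic nd (fun i => (hrow i).symm) (fun i => (hcol i).symm)
      (fun i j h => (IH _ h i j rfl).symm) i j hm
    omega

lemma wsum_apply (S : EdgeSet n) (c : Edge n → ℤ) (x : Fin (n+1)) :
    (∑ e ∈ S, c e • wv e) x =
      ∑ j, (if (x, j) ∈ S then c (x, j) else 0) - ∑ i, (if (i, x) ∈ S then c (i, x) else 0) := by
  have h1 : (∑ e ∈ S, c e • wv e) x
      = ∑ e : Edge n, (if e ∈ S then c e else 0) * (wv e x) := by
    simp [Finset.sum_apply, Finset.sum_ite_mem, ite_mul]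
  rw [h1, Fintype.sum_prod_type]
  simp only [wv, Pi.sub_apply, mul_sub, Finset.sum_sub_distrib, Pi.single_apply, mul_ite, mul_one,
    mul_zero]
  congr 1
  · rw [Finset.sum_eq_single x]
    · simp
    · intro b _ hb; simp [hb.symm]
    · simp
  · simp

lemma unique_NCA (S T : EdgeSet n) (gS : IsGraph S) (gT : IsGraph T) (ncS : Noncrossing S)
    (ncT : Noncrossing T) (aS : Alternating S) (aT : Alternating T) (v) (hS : PC S v)
    (hT : PC T v) : S = T := by
  have gen : ∀ S : EdgeSet n, IsGraph S → Noncrossing S → Alternating S → PC S v →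
      ∃ c : Fin (n+1) → Fin (n+1) → ℤ, (∀ i j, 0 ≤ c i j) ∧ (∀ i j, 0 < c i j ↔ (i, j) ∈ S) ∧
        (∀ x, ∑ j, c x j = max (v x) 0) ∧ (∀ x, ∑ i, c i x = max (- v x) 0) := by
    intro S gS ncS aS ⟨c, hc, hs⟩
    have nn : ∀ i j, 0 ≤ (if (i, j) ∈ S then c (i, j) else 0) := by
      intro i j; split_ifs with h
      · exact (hc _ h).le
      · rfl
    have hx : ∀ x, (∑ j, (if (x, j) ∈ S then c (x, j) else 0) = 0 ∨
        ∑ i, (if (i, x) ∈ S then c (i, x) else 0) = 0) := by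
      intro x
      by_cases h : ∃ i, (i, x) ∈ S
      · left
        obtain ⟨i, hi⟩ := h
        apply Finset.sum_eq_zero
        intro j _
        rw [if_neg]
        intro hj
        exact aS ⟨i, x, j, gS _ hi, gS _ hj, hi, hj⟩
      · right
        push Not at h
        apply Finset.sum_eq_zero
        intro j _
        rw [if_neg (h j)]
    refine ⟨fun i j => if (i, j) ∈ S then c (i, j) else 0, nn, ?_, ?_, ?_⟩
    · intro i j
      dsimp only
      split_ifs with h
      · simp [h, hc _ h]
      · simp [h]
    all_goals
      intro x
      have h1 := wsum_apply S c x
      rw [hs] at h1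
      have h2 := hx x
      have h3 : 0 ≤ ∑ j, (if (x, j) ∈ S then c (x, j) else 0) :=
        Finset.sum_nonneg (fun j _ => nn _ _)
      have h4 : 0 ≤ ∑ i, (if (i, x) ∈ S then c (i, x) else 0) :=
        Finset.sum_nonneg (fun j _ => nn _ _)
      dsimp only
      omega
  obtain ⟨c, c1, c2, c3, c4⟩ := gen S gS ncS aS hS
  obtain ⟨d, d1, d2, d3, d4⟩ := gen T gT ncT aT hT
  have key := unique_nc c d c1 d1 (fun i j h => gS _ ((c2 i j).1 h))
    (fun i j h => gT _ ((d2 i j).1 h))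
    (fun i j k l a b e h h' => ncS ⟨i, j, k, l, a, b, e, (c2 _ _).1 h, (c2 _ _).1 h'⟩)
    (fun i j k l a b e h h' => ncT ⟨i, j, k, l, a, b, e, (d2 _ _).1 h, (d2 _ _).1 h'⟩)
    (fun i => by rw [c3, d3]) (fun i => by rw [c4, d4])
  ext ⟨i, j⟩
  rw [← c2, ← d2, key _ i j rfl]

lemma Indp.acyclic (S : EdgeSet n) (h : Indp S) (hg : IsGraph S) : Acyclic S := by
  rw [Acyclic, SimpleGraph.isAcyclic_iff_forall_adj_isBridge]
  intro a b hab
  have main : ∀ a b : Fin (n+1), (a, b) ∈ S →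
      ¬ ((toSG S).deleteEdges {s(a, b)}).Reachable a b := by
    intro a b hab hr
    have hlt := hg _ hab
    have hnm : (a, b) ∉ S.erase (a, b) := by simp
    have hins : insert (a, b) (S.erase (a, b)) = S := Finset.insert_erase hab
    have sp : Spn (S.erase (a, b)) (wv (a, b)) := by
      rw [SimpleGraph.reachable_iff_reflTransGen] at hr
      have : ∀ x, Relation.ReflTransGen ((toSG S).deleteEdges {s(a, b)}).Adj a x →
          Spn (S.erase (a, b)) (wv (a, x)) := by
        intro x hx
        induction hx with
        | refl => convert Spn.zero using 1; simp [wv]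
        | tail _ hbc ih =>
          rename_i y z _
          rw [wv_add a y z]
          refine ih.add ?_
          rw [SimpleGraph.deleteEdges_adj, toSG, SimpleGraph.fromRel_adj] at hbc
          obtain ⟨⟨hne, h1⟩, h2⟩ := hbc
          rcases h1 with h1 | h1
          · apply Spn.mem
            rw [Finset.mem_erase]
            refine ⟨?_, h1⟩
            intro he
            apply h2
            simp only [Prod.mk.injEq] at he
            simp [he.1, he.2]
          · have : wv (y, z) = 0 - wv (z, y) := by simp [wv]
            rw [this]
            apply Spn.zero.sub
            apply Spn.mem
            rw [Finset.mem_erase]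
            refine ⟨?_, h1⟩
            intro he
            apply h2
            simp only [Prod.mk.injEq] at he
            simp [he.1, he.2]
      exact this b hr
    rw [← hins, Indp_ins _ _ hnm] at h
    have := h.2 1 (by simpa using sp)
    omega
  rw [SimpleGraph.isBridge_iff]
  rw [toSG, SimpleGraph.fromRel_adj] at hab
  rcases hab.2 with h1 | h1
  · exact main a b h1
  · intro hr
    apply main b a h1
    rw [Sym2.eq_swap]
    exact hr.symm

def HH (x : Fin (n+1)) : (Fin (n+1) → ℤ) →+ ℤ where
  toFun v := ∑ y ∈ Finset.Iic x, v y
  map_zero' := by simp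
  map_add' := by intro a b; simp [Finset.sum_add_distrib]

lemma HH_wv (x : Fin (n+1)) (e : Edge n) (he : e.1 < e.2) :
    HH x (wv e) = if e.1 ≤ x ∧ x < e.2 then 1 else 0 := by
  simp only [HH, wv, AddMonoidHom.coe_mk, ZeroHom.coe_mk, Pi.sub_apply, Finset.sum_sub_distrib,
    Finset.sum_pi_single', Finset.mem_Iic]
  split_ifs <;> first | rfl | omega

lemma HH_inj (u : Fin (n+1) → ℤ) (h : ∀ x, HH x u = 0) : u = 0 := by
  have : ∀ m : ℕ, ∀ x : Fin (n+1), (x : ℕ) = m → u x = 0 := by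
    intro m
    induction m using Nat.strong_induction_on with
    | _ m IH =>
      intro x hx
      have hh : ∑ y ∈ Finset.Iic x, u y = 0 := h x
      rw [Finset.sum_eq_single x] at hh
      · exact hh
      · intro y hy hne
        rw [Finset.mem_Iic] at hy
        exact IH y (by omega) y rfl
      · simp
  funext x; exact this _ x rfl

lemma HH_sum (x : Fin (n+1)) (S : EdgeSet n) (hS : IsGraph S) (c : Edge n → ℤ) :
    HH x (∑ e ∈ S, c e • wv e) = ∑ e ∈ S, if e.1 ≤ x ∧ x < e.2 then c e else 0 := by
  rw [map_sum]
  apply Finset.sum_congr rfl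
  intro e he
  rw [map_zsmul, HH_wv x e (hS e he)]
  simp

lemma mem_path (e : Edge n) : e ∈ (pathGraph n).toFinset ↔ (e.2 : ℕ) = e.1 + 1 := by
  rw [List.mem_toFinset, pathGraph, List.mem_ofFn]
  constructor
  · rintro ⟨i, rfl⟩; simp
  · intro h
    refine ⟨⟨e.1, by omega⟩, ?_⟩
    ext <;> simp [h]

lemma path_graph : IsGraph (pathGraph n).toFinset := by
  intro e he; rw [mem_path] at he; omega

lemma HH_path (x y : Fin (n+1)) (h : (y : ℕ) = x + 1) (c : Edge n → ℤ) :
    HH x (∑ e ∈ (pathGraph n).toFinset, c e • wv e) = c (x, y) := by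
  rw [HH_sum _ _ path_graph, Finset.sum_eq_single (x, y)]
  · rw [if_pos]; constructor <;> simp; omega
  · intro e he hne
    rw [mem_path] at he
    rw [if_neg]
    rintro ⟨h1, h2⟩
    apply hne
    ext <;> simp <;> omega
  · intro h'; rw [mem_path] at h'; exact absurd h h'

lemma HH_last (S : EdgeSet n) (hS : IsGraph S) (c : Edge n → ℤ) :
    HH (Fin.last n) (∑ e ∈ S, c e • wv e) = 0 := by
  rw [HH_sum _ _ hS]
  apply Finset.sum_eq_zero
  intro e _
  rw [if_neg]
  rintro ⟨_, h⟩
  exact absurd h (not_lt.2 (Fin.le_last _))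

lemma path_inv : Inv (pathGraph n) := by
  refine ⟨?_, ?_, ?_, ?_⟩
  · rw [pathGraph, List.pairwise_ofFn]
    intro i j hij
    simp only [okp, ne_eq, Fin.ext_iff, Fin.val_castSucc, Fin.val_succ, Fin.lt_def] at *
    omega
  · intro e he; exact path_graph e (List.mem_toFinset.2 he)
  · intro e he f hf
    rw [← List.mem_toFinset, mem_path] at he hf
    omega
  · intro c hc e he
    rw [mem_path] at he
    rw [← HH_path e.1 e.2 he c, hc, map_zero]

lemma PC_path (S : EdgeSet n) (hS : IsGraph S) :
    PC (pathGraph n).toFinset (∑ e ∈ S, (1 : ℤ) • wv e) ↔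
      ∀ x : Fin (n+1), x < Fin.last n → ∃ e ∈ S, e.1 ≤ x ∧ x < e.2 := by
  constructor
  · rintro ⟨c, hc, hs⟩ x hx
    have hx' : (x : ℕ) + 1 < n + 1 := by simpa [Fin.lt_def] using hx
    have h1 := HH_path x ⟨x + 1, hx'⟩ rfl c
    have h2 := hc (x, ⟨x + 1, hx'⟩) ((mem_path _).2 rfl)
    rw [hs, HH_sum x S hS (fun _ => 1)] at h1
    by_contra hcon
    push Not at hcon
    rw [Finset.sum_eq_zero] at h1
    · omega
    · intro e he
      rw [if_neg]
      rintro ⟨h3, h4⟩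
      exact absurd h4 (not_lt.2 (hcon e he h3))
  · intro h
    refine ⟨fun e => HH e.1 (∑ e ∈ S, (1 : ℤ) • wv e), ?_, ?_⟩
    · intro e he
      rw [mem_path] at he
      obtain ⟨f, hf, h1⟩ := h e.1 (by have := e.2.2; rw [Fin.lt_def]; simp; omega)
      beta_reduce
      rw [HH_sum e.1 S hS (fun _ => 1)]
      apply Finset.sum_pos'
      · intro i _; split_ifs <;> simp
      · exact ⟨f, hf, by rw [if_pos h1]; simp⟩
    · rw [← sub_eq_zero]
      apply HH_inj
      intro x
      rw [map_sub]
      by_cases hx : x = Fin.last n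
      · subst hx
        rw [HH_last _ path_graph, HH_last S hS (fun _ => 1), sub_zero]
      · have hx' : (x : ℕ) + 1 < n + 1 := by
          have := Fin.val_lt_last hx
          omega
        rw [HH_path x ⟨x + 1, hx'⟩ rfl]
        simp

lemma PC_self (S : EdgeSet n) : PC S (∑ e ∈ S, (1 : ℤ) • wv e) :=
  ⟨fun _ => 1, fun _ _ => one_pos, rfl⟩

lemma covers_iff (hn : 1 ≤ n) (S : EdgeSet n) (gS : IsGraph S) (nc : Noncrossing S)
    (al : Alternating S) :
    (∀ x : Fin (n+1), x < Fin.last n → ∃ e ∈ S, e.1 ≤ x ∧ x < e.2) ↔ (0, Fin.last n) ∈ S := by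
  constructor
  · intro h
    obtain ⟨e, he, h1, h2⟩ := h 0 (by rw [Fin.lt_def]; simp; omega)
    have hne : (S.filter (fun e => e.1 = 0)).Nonempty :=
      ⟨e, by simp only [Finset.mem_filter]; exact ⟨he, Fin.le_zero_iff.1 h1⟩⟩
    obtain ⟨f, hf, hmax⟩ := Finset.exists_max_image _ (fun e : Edge n => e.2) hne
    simp only [Finset.mem_filter] at hf hmax
    obtain ⟨hfS, hf0⟩ := hf
    by_cases hl : f.2 = Fin.last n
    · rw [← hl, ← hf0]; exact hfS
    · exfalso
      obtain ⟨g, hg, h3, h4⟩ := h f.2 (lt_of_le_of_ne (Fin.le_last _) hl)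
      rcases eq_or_lt_of_le h3 with h5 | h5
      · exact al ⟨f.1, f.2, g.2, gS f hfS, h4, hfS, by rw [← h5]; exact hg⟩
      · by_cases h6 : g.1 = 0
        · exact absurd (hmax g ⟨hg, h6⟩) (not_le.2 h4)
        · exact nc ⟨f.1, g.1, f.2, g.2, by rw [hf0]; exact Fin.pos_of_ne_zero h6, h5, h4, hfS, hg⟩
  · intro h x hx
    exact ⟨_, h, Fin.zero_le _, hx⟩

end Aux

/- STATEMENT 14 -/
theorem stmt14 {n : ℕ} (hn : 1 ≤ n) (R : BRTree n) (hR : R.Valid)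
    (hroot : R.root = pathGraph n) :
    (R.leaves.Pairwise fun L L' => L.toFinset ≠ L'.toFinset) ∧
    (∀ F : EdgeSet n,
      (IsGraph F ∧ Acyclic F ∧ Noncrossing F ∧ Alternating F ∧ (0, Fin.last n) ∈ F)
        ↔ ∃ L ∈ R.leaves, L.toFinset = F) ∧
    (∀ L ∈ R.leaves, ∃ L', Relation.ReflTransGen SwapStep L L' ∧ IsLexLabeled L') := by
  obtain ⟨h1, h2, h3⟩ := tree_main R hR (hroot ▸ path_inv)
  rw [hroot] at h2
  have gr : ∀ L ∈ R.leaves, IsGraph L.toFinset := fun L hL e he =>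
    (h1 L hL).1.inc e (List.mem_toFinset.1 he)
  have nc : ∀ L ∈ R.leaves, Noncrossing L.toFinset := by
    rintro L hL ⟨i, j, k, l, a, b, c, h, h'⟩
    exact (h1 L hL).1.nc _ (List.mem_toFinset.1 h) _ (List.mem_toFinset.1 h') ⟨a, b, c⟩
  have al : ∀ L ∈ R.leaves, Alternating L.toFinset := fun L hL =>
    (leaf_props L (h1 L hL).1 (h1 L hL).2).1
  refine ⟨?_, ?_, ?_⟩
  · refine h3.imp ?_
    intro L L' h heq
    exact h _ ⟨PC_self _, heq ▸ PC_self _⟩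
  · intro F
    constructor
    · rintro ⟨g, -, hnc, hal, hm⟩
      have hp := (PC_path F g).2 ((covers_iff hn F g hnc hal).2 hm)
      obtain ⟨L, hL, hLp⟩ := (h2 _).1 hp
      exact ⟨L, hL, unique_NCA _ _ (gr L hL) g (nc L hL) hnc (al L hL) hal _ hLp (PC_self F)⟩
    · rintro ⟨L, hL, rfl⟩
      refine ⟨gr L hL, (h1 L hL).1.ind.acyclic _ (gr L hL), nc L hL, al L hL, ?_⟩
      rw [← covers_iff hn _ (gr L hL) (nc L hL) (al L hL), ← PC_path _ (gr L hL)]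
      exact (h2 _).2 ⟨L, hL, PC_self _⟩
  · intro L hL
    exact (leaf_props L (h1 L hL).1 (h1 L hL).2).2

end RPaper
end

section
/- Let T be a noncrossing tree on [n+1], let T_1, …, T_k be the noncrossing alternating spanning trees of the transitive closure T̄, indexed so that P(T_1) <lex ⋯ <lex P(T_k), and for m = 1, …, k let r_m = #{e ∈ E(T_m) : P(T_m − e) ⊆ P(T_1) ∪ ⋯ ∪ P(T_{m−1})} (so r_1 = 0). Then in the formal power series ring ℚ[[x]]: (1 − x)^{n+1} · (1 + Σ_{t≥1} #(tP(T) ∩ ℤ^{n+1}) x^t) = Σ_{m=1}^{k} x^{r_m}. -/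
open scoped BigOperators

namespace RPaper

/-- `e ≤ f` where edges are ordered by first coordinate, then second coordinate. -/
def edgeLE {n : ℕ} (e f : Edge n) : Prop :=
  e.1 < f.1 ∨ (e.1 = f.1 ∧ e.2 ≤ f.2)

/-- `A <lex B`: at the first position where the increasing edge lists of `A` and `B`
differ, the edge of `A` is smaller; equivalently (for sets of equal size), the smallest
edge in the symmetric difference belongs to `A`. -/
def treeLexLT {n : ℕ} (A B : EdgeSet n) : Prop :=
  ∃ e ∈ A, e ∉ B ∧ ∀ f ∈ (A \ B) ∪ (B \ A), edgeLE e f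

lemma sum_coord {n : ℕ} (c : Edge n → ℝ) (v : Fin (n+1)) :
    (∑ e : Edge n, c e • ev e.1 e.2) v = ∑ j, c (v, j) - ∑ j, c (j, v) := by
  simp only [Finset.sum_apply, Pi.smul_apply, smul_eq_mul, ev, Pi.sub_apply, mul_sub,
    Finset.sum_sub_distrib]
  congr 1
  · rw [Fintype.sum_prod_type]
    rw [Finset.sum_eq_single v]
    · simp
    · intro b _ hb; simp [hb.symm]
    · simp
  · rw [Fintype.sum_prod_type_right]
    rw [Finset.sum_eq_single v]
    · simp
    · intro b _ hb; simp [hb.symm]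
    · simp

structure NCAc {n : ℕ} (c : Edge n → ℝ) : Prop where
  nonneg : ∀ e, 0 ≤ c e
  lt : ∀ i j, c (i, j) ≠ 0 → i < j
  nc : ∀ i j k l, i < j → j < k → k < l → c (i, k) ≠ 0 → c (j, l) ≠ 0 → False
  alt : ∀ i j k, c (i, j) ≠ 0 → c (j, k) ≠ 0 → False

lemma NCAc.out_eq {n : ℕ} {c : Edge n → ℝ} (h : NCAc c) (v : Fin (n+1)) :
    ∑ j, c (v, j) = max ((∑ e : Edge n, c e • ev e.1 e.2) v) 0 := by
  rw [sum_coord]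
  have h1 : 0 ≤ ∑ j, c (v, j) := Finset.sum_nonneg (fun _ _ => h.nonneg _)
  have h2 : 0 ≤ ∑ j, c (j, v) := Finset.sum_nonneg (fun _ _ => h.nonneg _)
  by_cases h0 : ∃ j, c (v, j) ≠ 0
  · obtain ⟨j, hj⟩ := h0
    have : ∑ j, c (j, v) = 0 := Finset.sum_eq_zero (fun k _ => by
      by_contra hk; exact h.alt _ _ _ hk hj)
    rw [this, sub_zero, max_eq_left h1]
  · push Not at h0
    have : ∑ j, c (v, j) = 0 := Finset.sum_eq_zero (fun k _ => h0 k)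
    rw [this, max_eq_right]; linarith

lemma NCAc.in_eq {n : ℕ} {c : Edge n → ℝ} (h : NCAc c) (v : Fin (n+1)) :
    ∑ j, c (j, v) = max ((∑ e : Edge n, c e • ev e.1 e.2) v) 0 -
      (∑ e : Edge n, c e • ev e.1 e.2) v := by
  rw [← h.out_eq, sum_coord]; ring

lemma NCAc.sum_eq {n : ℕ} {c : Edge n → ℝ} (h : NCAc c) :
    ∑ e, c e = ∑ v, max ((∑ e : Edge n, c e • ev e.1 e.2) v) 0 := by
  rw [Fintype.sum_prod_type]
  exact Finset.sum_congr rfl (fun v _ => h.out_eq v)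

lemma uniq_step {n : ℕ} {c c' : Edge n → ℝ} (h : NCAc c) (h' : NCAc c')
    (hs : ∑ e : Edge n, c e • ev e.1 e.2 = ∑ e : Edge n, c' e • ev e.1 e.2)
    (i j : Fin (n+1))
    (ih : ∀ i' j' : Fin (n+1), (j' : ℕ) - (i' : ℕ) < (j : ℕ) - (i : ℕ) → c (i', j') = c' (i', j'))
    (hlt : c' (i, j) < c (i, j)) : False := by
  have hij : i < j := h.lt i j (by have := h'.nonneg (i, j); intro h0; linarith)
  have hij' : (i : ℕ) < j := hij
  have e1 : ∑ k, c (i, k) = ∑ k, c' (i, k) := by rw [h.out_eq, h'.out_eq, hs]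
  have e2 : ∑ k, c (k, j) = ∑ k, c' (k, j) := by rw [h.in_eq, h'.in_eq, hs]
  have a1 : ∃ k, j < k ∧ c' (i, k) ≠ 0 := by
    by_contra hcon
    push Not at hcon
    refine absurd e1 (ne_of_gt (Finset.sum_lt_sum (fun k _ => ?_) ⟨j, Finset.mem_univ _, hlt⟩))
    rcases lt_trichotomy k j with hk | hk | hk
    · refine (ih i k ?_).ge
      have : (k : ℕ) < j := hk
      omega
    · subst hk; exact hlt.le
    · rw [hcon k hk]; exact h.nonneg _
  have a2 : ∃ l, l < i ∧ c' (l, j) ≠ 0 := by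
    by_contra hcon
    push Not at hcon
    refine absurd e2 (ne_of_gt (Finset.sum_lt_sum (fun k _ => ?_) ⟨i, Finset.mem_univ _, hlt⟩))
    rcases lt_trichotomy k i with hk | hk | hk
    · rw [hcon k hk]; exact h.nonneg _
    · subst hk; exact hlt.le
    · refine (ih k j ?_).ge
      have : (i : ℕ) < k := hk
      omega
  obtain ⟨k, hk, hk'⟩ := a1
  obtain ⟨l, hl, hl'⟩ := a2
  exact h'.nc l i j k hl hij hk hl' hk'

lemma uniq {n : ℕ} {c c' : Edge n → ℝ} (h : NCAc c) (h' : NCAc c')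
    (hs : ∑ e : Edge n, c e • ev e.1 e.2 = ∑ e : Edge n, c' e • ev e.1 e.2) : c = c' := by
  have key : ∀ d : ℕ, ∀ i j : Fin (n+1), (j : ℕ) - (i : ℕ) = d → c (i, j) = c' (i, j) := by
    intro d
    induction d using Nat.strong_induction_on with
    | _ d ih =>
      intro i j hd
      rcases lt_trichotomy (c (i, j)) (c' (i, j)) with hlt | heq | hlt
      · exact (uniq_step h' h hs.symm i j
          (fun i' j' hh => (ih _ (hd ▸ hh) i' j' rfl).symm) hlt).elim
      · exact heq
      · exact (uniq_step h h' hs i j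
          (fun i' j' hh => (ih _ (hd ▸ hh) i' j' rfl)) hlt).elim
  funext ⟨i, j⟩
  exact key _ i j rfl

/-- bundle -/
structure NCA {n : ℕ} (F : EdgeSet n) : Prop where
  gr : IsGraph F
  nc : Noncrossing F
  alt : Alternating F

lemma NCA.toc {n : ℕ} {F : EdgeSet n} (h : NCA F) (c : Edge n → ℝ) (hc : ∀ e ∈ F, 0 ≤ c e) :
    NCAc (fun e => if e ∈ F then c e else 0) where
  nonneg e := by split_ifs with he; exacts [hc e he, le_rfl]
  lt i j hh := by
    by_cases he : (i, j) ∈ F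
    · exact h.gr _ he
    · simp [he] at hh
  nc i j k l h1 h2 h3 ha hb := by
    refine h.nc ⟨i, j, k, l, h1, h2, h3, ?_, ?_⟩
    · by_contra he; simp [he] at ha
    · by_contra he; simp [he] at hb
  alt i j k ha hb := by
    have h1 : (i, j) ∈ F := by by_contra he; simp [he] at ha
    have h2 : (j, k) ∈ F := by by_contra he; simp [he] at hb
    exact h.alt ⟨i, j, k, h.gr _ h1, h.gr _ h2, h1, h2⟩

lemma sum_ext {n : ℕ} (F : EdgeSet n) (c : Edge n → ℝ) :
    ∑ e : Edge n, (if e ∈ F then c e else 0) • ev e.1 e.2 = ∑ e ∈ F, c e • ev e.1 e.2 := by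
  simp [ite_smul, Finset.sum_ite_mem]

lemma NCA.uniq {n : ℕ} {F F' : EdgeSet n} (h : NCA F) (h' : NCA F') {c c' : Edge n → ℝ}
    (hc : ∀ e ∈ F, 0 ≤ c e) (hc' : ∀ e ∈ F', 0 ≤ c' e)
    (hs : ∑ e ∈ F, c e • ev e.1 e.2 = ∑ e ∈ F', c' e • ev e.1 e.2) (e : Edge n) :
    (if e ∈ F then c e else 0) = (if e ∈ F' then c' e else 0) := by
  have := RPaper.uniq (h.toc c hc) (h'.toc c' hc') (by rw [sum_ext, sum_ext, hs])
  exact congrFun this e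

lemma NCA.sum_eq {n : ℕ} {F : EdgeSet n} (h : NCA F) {c : Edge n → ℝ}
    (hc : ∀ e ∈ F, 0 ≤ c e) :
    ∑ e ∈ F, c e = ∑ v, max ((∑ e ∈ F, c e • ev e.1 e.2) v) 0 := by
  have := (h.toc c hc).sum_eq
  rw [sum_ext] at this
  rw [← this]; simp [Finset.sum_ite_mem]

lemma toSG_adj {n : ℕ} {F : EdgeSet n} {a b : Fin (n+1)} :
    (toSG F).Adj a b ↔ a ≠ b ∧ ((a, b) ∈ F ∨ (b, a) ∈ F) := by
  simp [toSG, SimpleGraph.fromRel_adj]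

lemma reach_cut {n : ℕ} {F : EdgeSet n} {u v : Fin (n+1)} (h : (toSG F).Reachable u v)
    (W : Set (Fin (n+1))) (hW : ∀ a b, (a, b) ∈ F → (a ∈ W ↔ b ∈ W)) : u ∈ W ↔ v ∈ W := by
  obtain ⟨p⟩ := h
  induction p with
  | nil => rfl
  | cons hadj _ ih =>
    rw [← ih]
    rcases (toSG_adj.1 hadj).2 with h1 | h1
    · exact hW _ _ h1
    · exact (hW _ _ h1).symm

lemma edge_reach {n : ℕ} {F : EdgeSet n} (hF : IsGraph F) {a b : Fin (n+1)} (h : (a, b) ∈ F) :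
    (toSG F).Reachable a b :=
  SimpleGraph.Adj.reachable (toSG_adj.2 ⟨(hF _ h).ne, Or.inl h⟩)

lemma conn_of_cut {n : ℕ} {F : EdgeSet n} (hF : IsGraph F)
    (h : ∀ W : Set (Fin (n+1)), (∀ a b, (a, b) ∈ F → (a ∈ W ↔ b ∈ W)) →
      ∀ u v, u ∈ W → v ∈ W) : (toSG F).Connected := by
  refine { preconnected := fun u v => ?_, nonempty := ⟨0⟩ }
  refine h {v | (toSG F).Reachable u v} (fun a b hab => ?_) u v (SimpleGraph.Reachable.refl u)
  exact ⟨fun h => h.trans (edge_reach hF hab), fun h => h.trans (edge_reach hF hab).symm⟩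

lemma ev_self {n : ℕ} (i : Fin (n+1)) : ev i i = 0 := by simp [ev]
lemma ev_add {n : ℕ} (i j k : Fin (n+1)) : ev i j + ev j k = ev i k := by simp [ev]
lemma ev_neg {n : ℕ} (i j : Fin (n+1)) : - ev i j = ev j i := by simp [ev]

lemma reach_span {n : ℕ} {F : EdgeSet n} {u v : Fin (n+1)} (h : (toSG F).Reachable u v) :
    ev u v ∈ Submodule.span ℝ ((fun e : Edge n => ev e.1 e.2) '' (F : Set (Edge n))) := by
  obtain ⟨p⟩ := h
  induction p with
  | nil => rw [ev_self]; exact Submodule.zero_mem _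
  | @cons a b c hadj _ ih =>
    rw [← ev_add a b c]
    refine Submodule.add_mem _ ?_ ih
    rcases (toSG_adj.1 hadj).2 with h1 | h1
    · exact Submodule.subset_span ⟨_, h1, rfl⟩
    · rw [← ev_neg]
      exact Submodule.neg_mem _ (Submodule.subset_span ⟨_, h1, rfl⟩)

lemma toSG_delete {n : ℕ} {F : EdgeSet n} (hF : IsGraph F) {a b : Fin (n+1)} (h : (a, b) ∈ F) :
    (toSG F).deleteEdges {s(a, b)} = toSG (F.erase (a, b)) := by
  ext x y
  have := hF _ h
  rw [SimpleGraph.deleteEdges_adj, toSG_adj, toSG_adj]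
  simp only [Set.mem_singleton_iff, Sym2.eq_iff, Finset.mem_erase, Prod.mk.injEq, ne_eq]
  constructor
  · rintro ⟨⟨h1, h2⟩, h3⟩
    refine ⟨h1, ?_⟩
    rcases h2 with h2 | h2
    · left; exact ⟨fun h => h3 (Or.inl h), h2⟩
    · right; exact ⟨fun h => h3 (Or.inr ⟨h.2, h.1⟩), h2⟩
  · rintro ⟨h1, ⟨h2, h3⟩ | ⟨h2, h3⟩⟩
    · refine ⟨⟨h1, Or.inl h3⟩, ?_⟩
      rintro (h4 | ⟨rfl, rfl⟩)
      · exact h2 h4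
      · exact absurd (hF _ h3) (not_lt.2 (le_of_lt this))
    · refine ⟨⟨h1, Or.inr h3⟩, ?_⟩
      rintro (⟨rfl, rfl⟩ | ⟨rfl, rfl⟩)
      · exact absurd (hF _ h3) (not_lt.2 (le_of_lt this))
      · exact h2 ⟨rfl, rfl⟩

lemma acyclic_iff {n : ℕ} {F : EdgeSet n} (hF : IsGraph F) :
    (toSG F).IsAcyclic ↔ ∀ a b, (a, b) ∈ F → ¬ (toSG (F.erase (a, b))).Reachable a b := by
  rw [SimpleGraph.isAcyclic_iff_forall_adj_isBridge]
  constructor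
  · intro h a b hab
    have := h (toSG_adj.2 ⟨(hF _ hab).ne, Or.inl hab⟩)
    rwa [SimpleGraph.isBridge_iff, toSG_delete hF hab] at this
  · intro h v w hvw
    rcases (toSG_adj.1 hvw).2 with h1 | h1
    · rw [SimpleGraph.isBridge_iff, toSG_delete hF h1]
      exact h _ _ h1
    · rw [Sym2.eq_swap, SimpleGraph.isBridge_iff, toSG_delete hF h1]
      exact h _ _ h1

lemma NCA.acyclic {n : ℕ} {F : EdgeSet n} (h : NCA F) : (toSG F).IsAcyclic := by
  rw [acyclic_iff h.gr]
  intro a b hab hr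
  have := reach_span hr
  rw [Submodule.mem_span_image_finset_iff_exists_fun'] at this
  obtain ⟨c, hc⟩ := this
  have key := h.uniq h (c := fun e => if e = (a, b) then 1 else max (-c e) 0)
    (c' := fun e => if e = (a, b) then 0 else max (c e) 0)
    (fun e _ => by split_ifs <;> simp) (fun e _ => by split_ifs <;> simp)
    (by
      rw [← Finset.add_sum_erase _ _ hab, ← Finset.add_sum_erase _ _ hab]
      simp only [if_true, one_smul, zero_smul, zero_add]
      rw [← hc, ← Finset.sum_add_distrib]
      refine Finset.sum_congr rfl (fun e he => ?_)
      rw [if_neg (Finset.ne_of_mem_erase he), if_neg (Finset.ne_of_mem_erase he), ← add_smul]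
      congr 1
      rcases le_total (c e) 0 with h0 | h0
      · rw [max_eq_left (by linarith), max_eq_right h0]; ring
      · rw [max_eq_right (by linarith), max_eq_left h0]; ring) (a, b)
  simp [hab] at key

lemma NCA.tree {n : ℕ} {F : EdgeSet n} (h : NCA F) (hc : (toSG F).Connected) : IsTreeG F :=
  ⟨h.gr, ⟨hc, h.acyclic⟩⟩

/-- sum over a cut -/
noncomputable def cutv {n : ℕ} (W : Finset (Fin (n+1))) : Vtype n →ₗ[ℝ] ℝ :=
  ∑ v ∈ W, LinearMap.proj v

lemma cutv_apply {n : ℕ} (W : Finset (Fin (n+1))) (x : Vtype n) : cutv W x = ∑ v ∈ W, x v := by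
  simp [cutv]

lemma cutv_ev {n : ℕ} (W : Finset (Fin (n+1))) (i j : Fin (n+1)) :
    cutv W (ev i j) = (if i ∈ W then 1 else 0) - (if j ∈ W then 1 else 0) := by
  simp [cutv_apply, ev]

open Classical in
lemma tree_cut {n : ℕ} {F : EdgeSet n} (hF : IsTreeG F) (e : Edge n) (he : e ∈ F) :
    ∃ W : Finset (Fin (n+1)), ∀ f ∈ F, cutv W (ev f.1 f.2) = if f = e then 1 else 0 := by
  obtain ⟨a, b⟩ := e
  have hb := (acyclic_iff hF.1).1 hF.2.isAcyclic a b he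
  refine ⟨Finset.univ.filter (fun v => (toSG (F.erase (a, b))).Reachable a v), ?_⟩
  rintro ⟨x, y⟩ hf
  rw [cutv_ev]
  simp only [Finset.mem_filter, Finset.mem_univ, true_and]
  split_ifs with h1 h2 h3 h3 h3 h4 h4 <;> simp_all
  · have := edge_reach (F := F.erase (a, b)) (fun e he => hF.1 e (Finset.mem_of_mem_erase he))
      (a := x) (b := y) (Finset.mem_erase.2 ⟨by simpa using h3, hf⟩)
    exact h2 (h1.trans this)
  · have := edge_reach (F := F.erase (a, b)) (fun e he => hF.1 e (Finset.mem_of_mem_erase he))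
      (a := x) (b := y) (Finset.mem_erase.2 ⟨by rintro ⟨⟩; exact h1 (SimpleGraph.Reachable.refl _), hf⟩)
    exact h1 (SimpleGraph.Reachable.trans ‹_› this.symm)

lemma cut_coeff {n : ℕ} {F : EdgeSet n} {W : Finset (Fin (n+1))} {e : Edge n} (he : e ∈ F)
    (hW : ∀ f ∈ F, cutv W (ev f.1 f.2) = if f = e then 1 else 0) (c : Edge n → ℝ) :
    cutv W (∑ f ∈ F, c f • ev f.1 f.2) = c e := by
  rw [map_sum, Finset.sum_congr rfl (fun f hf => by rw [map_smul, hW f hf])]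
  simp [he]

/-- integer vectors in the cone of a tree have natural coefficients -/
lemma tree_nat {n : ℕ} {F : EdgeSet n} (hF : IsTreeG F) {x : Vtype n} (hx : x ∈ cone F)
    (hz : ∀ i, ∃ z : ℤ, x i = z) : ∃ d : Edge n → ℕ, x = ∑ e ∈ F, (d e : ℝ) • ev e.1 e.2 := by
  obtain ⟨c, hc, rfl⟩ := hx
  have : ∀ e : Edge n, ∃ d : ℕ, e ∈ F → c e = d := by
    intro e
    by_cases he : e ∈ F
    · obtain ⟨W, hW⟩ := tree_cut hF e he
      choose z hz using hz
      have h1 := cut_coeff he hW c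
      rw [cutv_apply, Finset.sum_congr rfl (fun v _ => hz v)] at h1
      have h2 := hc e
      rw [← h1, ← Int.cast_sum] at h2
      refine ⟨(∑ v ∈ W, z v).toNat, fun _ => ?_⟩
      rw [← h1, ← Int.cast_sum]
      have h3 : 0 ≤ ∑ v ∈ W, z v := by exact_mod_cast h2
      exact_mod_cast (Int.toNat_of_nonneg h3).symm
    · exact ⟨0, fun h => absurd h he⟩
  choose d hd using this
  exact ⟨d, Finset.sum_congr rfl (fun e he => by rw [hd e he])⟩

lemma tree_card {n : ℕ} {F : EdgeSet n} (hF : IsTreeG F) : F.card = n := by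
  classical
  have h := hF.2.card_edgeFinset
  have : (toSG F).edgeFinset = F.image (fun e => s(e.1, e.2)) := by
    ext e
    induction e with
    | h x y =>
      simp only [SimpleGraph.mem_edgeFinset, SimpleGraph.mem_edgeSet, toSG_adj, Finset.mem_image,
        Sym2.eq_iff, Prod.exists]
      constructor
      · rintro ⟨_, h | h⟩
        · exact ⟨x, y, h, Or.inl ⟨rfl, rfl⟩⟩
        · exact ⟨y, x, h, Or.inr ⟨rfl, rfl⟩⟩
      · rintro ⟨a, b, h, ⟨rfl, rfl⟩ | ⟨rfl, rfl⟩⟩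
        · exact ⟨(hF.1 _ h).ne, Or.inl h⟩
        · exact ⟨(hF.1 _ h).ne', Or.inr h⟩
  rw [this, Finset.card_image_of_injOn] at h
  · simpa using h
  · rintro ⟨a, b⟩ h1 ⟨x, y⟩ h2 h3
    simp only [Sym2.eq_iff] at h3
    rcases h3 with ⟨rfl, rfl⟩ | ⟨rfl, rfl⟩
    · rfl
    · exact absurd (hF.1 _ h1) (not_lt.2 (le_of_lt (hF.1 _ h2)))

/-- step relation -/
def stp {n : ℕ} (T : EdgeSet n) (a b : Fin (n+1)) : Prop := a < b ∧ (a, b) ∈ T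

lemma rtg_le {n : ℕ} {T : EdgeSet n} {a b : Fin (n+1)} (h : Relation.ReflTransGen (stp T) a b) :
    a ≤ b := by
  induction h with
  | refl => exact le_rfl
  | tail _ h ih => exact ih.trans h.1.le

lemma mem_closure_iff {n : ℕ} {T : EdgeSet n} {a b : Fin (n+1)} :
    (a, b) ∈ closureT T ↔ a < b ∧ Relation.ReflTransGen (stp T) a b := by
  constructor
  · rintro ⟨h1, h2⟩
    exact ⟨h1, Relation.TransGen.to_reflTransGen h2⟩
  · rintro ⟨h1, h2⟩
    refine ⟨h1, ?_⟩
    rcases Relation.reflTransGen_iff_eq_or_transGen.1 h2 with h | h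
    · exact absurd h.symm h1.ne
    · exact h

lemma pass {n : ℕ} {T : EdgeSet n} (hnc : Noncrossing T) {i q : Fin (n+1)} (hiq : (i, q) ∈ T)
    {j l : Fin (n+1)} (h : Relation.ReflTransGen (stp T) j l) (h1 : i < j) (h2 : j ≤ q)
    (h3 : q ≤ l) : Relation.ReflTransGen (stp T) j q ∧ Relation.ReflTransGen (stp T) q l := by
  induction h using Relation.ReflTransGen.head_induction_on with
  | refl =>
    obtain rfl := le_antisymm h2 h3
    exact ⟨.refl, .refl⟩
  | @head j j1 hst hr ih =>
    rcases h2.eq_or_lt with rfl | h2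
    · exact ⟨.refl, .head hst hr⟩
    · rcases le_or_gt j1 q with h4 | h4
      · obtain ⟨a, b⟩ := ih (h1.trans hst.1) h4
        exact ⟨.head hst a, b⟩
      · exact (hnc ⟨i, j, q, j1, h1, h2, h4, hiq, hst.2⟩).elim

lemma meet {n : ℕ} {T : EdgeSet n} (hnc : Noncrossing T) {i j k l : Fin (n+1)}
    (hik : Relation.ReflTransGen (stp T) i k) (hjl : Relation.ReflTransGen (stp T) j l)
    (h1 : i ≤ j) (h2 : j ≤ k) (h3 : k ≤ l) :
    Relation.ReflTransGen (stp T) i l ∧ Relation.ReflTransGen (stp T) j k := by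
  induction hik using Relation.ReflTransGen.head_induction_on with
  | refl =>
    obtain rfl := le_antisymm h1 h2
    exact ⟨hjl, .refl⟩
  | @head i i1 hst hr ih =>
    rcases h1.eq_or_lt with rfl | h1
    · exact ⟨hjl, .head hst hr⟩
    · rcases le_or_gt i1 j with h4 | h4
      · obtain ⟨a, b⟩ := ih h4
        exact ⟨.head hst a, b⟩
      · obtain ⟨a, b⟩ := pass hnc hst.2 hjl h1 h4.le ((rtg_le hr).trans h3)
        exact ⟨.head hst b, a.trans hr⟩

/-- the cost of an edge -/
def wt {n : ℕ} (e : Edge n) : ℕ := ((e.2 : ℕ) - (e.1 : ℕ)) * (2 * (n + 1) - ((e.2 : ℕ) - (e.1 : ℕ)))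

lemma wt_alt {n : ℕ} {i j k : Fin (n+1)} (h1 : i < j) (h2 : j < k) :
    wt (i, k) < wt (i, j) + wt (j, k) := by
  have hk := k.isLt
  have h1' : (i : ℕ) < j := h1
  have h2' : (j : ℕ) < k := h2
  simp only [wt]
  obtain ⟨a, ha⟩ := Nat.exists_eq_add_of_lt h1'
  obtain ⟨b, hb⟩ := Nat.exists_eq_add_of_lt h2'
  obtain ⟨c, hc⟩ := Nat.exists_eq_add_of_lt hk
  have e1 : (j : ℕ) - i = a + 1 := by omega
  have e2 : (k : ℕ) - j = b + 1 := by omega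
  have e3 : (k : ℕ) - i = a + b + 2 := by omega
  rw [e1, e2, e3]
  obtain ⟨N, hN⟩ : ∃ N, 2 * (n + 1) = N + (a + b + 2) := ⟨2 * (n+1) - (a + b + 2), by omega⟩
  have f1 : 2 * (n + 1) - (a + 1) = N + b + 1 := by omega
  have f2 : 2 * (n + 1) - (b + 1) = N + a + 1 := by omega
  have f3 : 2 * (n + 1) - (a + b + 2) = N := by omega
  rw [f1, f2, f3]
  nlinarith

lemma wt_nc {n : ℕ} {i j k l : Fin (n+1)} (h1 : i < j) (h2 : j < k) (h3 : k < l) :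
    wt (i, l) + wt (j, k) < wt (i, k) + wt (j, l) := by
  have hk := l.isLt
  have h1' : (i : ℕ) < j := h1
  have h2' : (j : ℕ) < k := h2
  have h3' : (k : ℕ) < l := h3
  simp only [wt]
  obtain ⟨a, ha⟩ := Nat.exists_eq_add_of_lt h1'
  obtain ⟨b, hb⟩ := Nat.exists_eq_add_of_lt h2'
  obtain ⟨c, hc⟩ := Nat.exists_eq_add_of_lt h3'
  have e1 : (l : ℕ) - i = a + b + c + 3 := by omega
  have e2 : (k : ℕ) - j = b + 1 := by omega
  have e3 : (k : ℕ) - i = a + b + 2 := by omega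
  have e4 : (l : ℕ) - j = b + c + 2 := by omega
  rw [e1, e2, e3, e4]
  obtain ⟨N, hN⟩ : ∃ N, 2 * (n + 1) = N + (a + b + c + 3) :=
    ⟨2 * (n+1) - (a + b + c + 3), by omega⟩
  have f1 : 2 * (n + 1) - (a + b + c + 3) = N := by omega
  have f2 : 2 * (n + 1) - (b + 1) = N + a + c + 2 := by omega
  have f3 : 2 * (n + 1) - (a + b + 2) = N + c + 1 := by omega
  have f4 : 2 * (n + 1) - (b + c + 2) = N + a + 1 := by omega
  rw [f1, f2, f3, f4]
  nlinarith

/-- sum of the vectors of a multiset of edges -/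
def msum {n : ℕ} (s : Multiset (Edge n)) : Vtype n := (s.map (fun e => ev e.1 e.2)).sum

lemma exists_nca {n : ℕ} {T : EdgeSet n} (hnc : Noncrossing T) (s0 : Multiset (Edge n))
    (hs0 : ∀ e ∈ s0, e ∈ closureT T) :
    ∃ s : Multiset (Edge n), (∀ e ∈ s, e ∈ closureT T) ∧ msum s = msum s0 ∧ NCA s.toFinset := by
  obtain ⟨s, ⟨hs, hsum⟩, hmin⟩ := WellFounded.has_min
    (InvImage.wf (fun s : Multiset (Edge n) => (s.map wt).sum) Nat.lt_wfRel.wf)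
    {s | (∀ e ∈ s, e ∈ closureT T) ∧ msum s = msum s0} ⟨s0, hs0, rfl⟩
  have hmin' : ∀ s', (∀ e ∈ s', e ∈ closureT T) → msum s' = msum s →
      ¬ (s'.map wt).sum < (s.map wt).sum := fun s' h1 h2 => hmin s' ⟨h1, h2.trans hsum⟩
  have two : ∀ e f : Edge n, e ∈ s → f ∈ s → e ≠ f → ∃ s', s = e ::ₘ f ::ₘ s' := by
    intro e f he hf hne
    obtain ⟨s1, rfl⟩ := Multiset.exists_cons_of_mem he
    have : f ∈ s1 := (Multiset.mem_cons.1 hf).resolve_left hne.symm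
    obtain ⟨s2, rfl⟩ := Multiset.exists_cons_of_mem this
    exact ⟨s2, rfl⟩
  refine ⟨s, hs, hsum, ⟨?_, ?_, ?_⟩⟩
  · intro e he
    exact (hs e (Multiset.mem_toFinset.1 he)).1
  · rintro ⟨i, j, k, l, h1, h2, h3, ha, hb⟩
    rw [Multiset.mem_toFinset] at ha hb
    obtain ⟨s', rfl⟩ := two _ _ ha hb (by simp [h1.ne])
    have h4 := meet hnc (mem_closure_iff.1 (hs _ ha)).2 (mem_closure_iff.1 (hs _ hb)).2
      h1.le h2.le h3.le
    refine hmin' ((i, l) ::ₘ (j, k) ::ₘ s') ?_ ?_ ?_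
    · intro e he
      rcases Multiset.mem_cons.1 he with rfl | he
      · exact mem_closure_iff.2 ⟨h1.trans (h2.trans h3), h4.1⟩
      rcases Multiset.mem_cons.1 he with rfl | he
      · exact mem_closure_iff.2 ⟨h2, h4.2⟩
      · exact hs e (Multiset.mem_cons_of_mem (Multiset.mem_cons_of_mem he))
    · simp only [msum, Multiset.map_cons, Multiset.sum_cons, ev]; abel
    · have := wt_nc h1 h2 h3
      simp only [Multiset.map_cons, Multiset.sum_cons]; omega
  · rintro ⟨i, j, k, h1, h2, ha, hb⟩
    rw [Multiset.mem_toFinset] at ha hb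
    obtain ⟨s', rfl⟩ := two _ _ ha hb (by simp [h1.ne])
    refine hmin' ((i, k) ::ₘ s') ?_ ?_ ?_
    · intro e he
      rcases Multiset.mem_cons.1 he with rfl | he
      · exact mem_closure_iff.2 ⟨h1.trans h2, (mem_closure_iff.1 (hs _ ha)).2.trans
          (mem_closure_iff.1 (hs _ hb)).2⟩
      · exact hs e (Multiset.mem_cons_of_mem (Multiset.mem_cons_of_mem he))
    · simp only [msum, Multiset.map_cons, Multiset.sum_cons, ev]; abel
    · have := wt_alt h1 h2
      simp only [Multiset.map_cons, Multiset.sum_cons]; omega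

lemma msum_eq {n : ℕ} (s : Multiset (Edge n)) :
    msum s = ∑ e ∈ s.toFinset, (s.count e : ℝ) • ev e.1 e.2 := by
  rw [msum, Finset.sum_multiset_map_count]
  simp [Nat.cast_smul_eq_nsmul]

lemma odd_sum {n : ℕ} (T : EdgeSet n) (idx : Edge n → ℕ) (hidx : Function.Injective idx)
    (K : ℕ) (hK : ∀ e, idx e < K) (d : Edge n → ℕ) (ε : Edge n → ℤ)
    (hε : ∀ e, ε e = 0 ∨ ε e = 1 ∨ ε e = -1)
    (hs : ∑ e ∈ T, (2 ^ K * (d e : ℤ) + 2 ^ idx e) * ε e = 0) : ∀ e ∈ T, ε e = 0 := by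
  by_contra hcon
  push Not at hcon
  obtain ⟨e0, he0, hne0⟩ := hcon
  obtain ⟨e, he, hmin⟩ := Finset.exists_min_image (T.filter (fun e => ε e ≠ 0)) idx
    ⟨e0, Finset.mem_filter.2 ⟨he0, hne0⟩⟩
  rw [Finset.mem_filter] at he
  have hbig : ∀ k, k < K → (2 : ℤ) ^ (k + 1) ∣ 2 ^ K := fun k hk => pow_dvd_pow 2 hk
  rw [← Finset.add_sum_erase _ _ he.1] at hs
  have hdiv : (2 : ℤ) ^ (idx e + 1) ∣ ∑ f ∈ T.erase e, (2 ^ K * (d f : ℤ) + 2 ^ idx f) * ε f := by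
    refine Finset.dvd_sum (fun f hf => ?_)
    rw [Finset.mem_erase] at hf
    by_cases h0 : ε f = 0
    · simp [h0]
    · have h1 := hmin f (Finset.mem_filter.2 ⟨hf.2, h0⟩)
      have h2 : idx e ≠ idx f := fun h => hf.1 (hidx h).symm
      exact Dvd.dvd.mul_right (dvd_add (Dvd.dvd.mul_right (hbig _ (hK e)) _)
        (pow_dvd_pow 2 (by omega))) _
  have h3 : (2 : ℤ) ^ (idx e + 1) ∣ (2 ^ K * (d e : ℤ) + 2 ^ idx e) * ε e := by
    have := (dvd_add_left hdiv).1 (hs ▸ dvd_zero _)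
    exact this
  have h4 : (2 : ℤ) ^ (idx e + 1) ∣ (2 ^ K * (d e : ℤ) + 2 ^ idx e) := by
    rcases hε e with h | h | h
    · exact absurd h he.2
    · simpa [h] using h3
    · rw [h, mul_neg_one] at h3; exact (dvd_neg.1 h3)
  have h5 : (2 : ℤ) ^ (idx e + 1) ∣ 2 ^ idx e :=
    (dvd_add_right (Dvd.dvd.mul_right (hbig _ (hK e)) _)).1 h4
  have h6 := Int.le_of_dvd (by positivity) h5
  have h7 : (0 : ℤ) < 2 ^ idx e := by positivity
  rw [pow_succ] at h6
  linarith

lemma msum_rep {n : ℕ} (T : EdgeSet n) (D : Edge n → ℕ) :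
    msum (∑ e ∈ T, Multiset.replicate (D e) e) = ∑ e ∈ T, (D e : ℝ) • ev e.1 e.2 := by
  have : ∀ s t : Multiset (Edge n), msum (s + t) = msum s + msum t := by
    intro s t; simp [msum]
  induction T using Finset.induction_on with
  | empty => simp [msum]
  | insert a s ha ih =>
    rw [Finset.sum_insert ha, this, ih, Finset.sum_insert ha]
    simp [msum, Nat.cast_smul_eq_nsmul]

lemma exists_tree {n : ℕ} {T : EdgeSet n} (hT : IsTreeG T) (hnc : Noncrossing T)
    (d : Edge n → ℕ) : ∃ S ∈ NCASpanningTrees T, ∃ c : Edge n → ℕ,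
      ∑ e ∈ T, (d e : ℝ) • ev e.1 e.2 = ∑ e ∈ S, (c e : ℝ) • ev e.1 e.2 := by
  classical
  obtain ⟨idx, hidx, hlt⟩ : ∃ idx : Edge n → ℕ, Function.Injective idx ∧
      ∀ e, idx e < Fintype.card (Edge n) :=
    ⟨fun e => Fintype.equivFin (Edge n) e,
      fun a b h => (Fintype.equivFin (Edge n)).injective (Fin.ext h), fun e => Fin.isLt _⟩
  set L : ℕ := ∑ e ∈ T, 2 ^ idx e with hL
  obtain ⟨K, hK, hLK⟩ : ∃ K, (∀ e, idx e < K) ∧ L < 2 ^ K :=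
    ⟨Fintype.card (Edge n) + L, fun e => (hlt e).trans_le (by omega),
      (Nat.lt_two_pow_self).trans_le (Nat.pow_le_pow_right (by norm_num) (by omega))⟩
  let D : Edge n → ℕ := fun e => 2 ^ K * d e + 2 ^ idx e
  let ε : Finset (Fin (n+1)) → Edge n → ℤ :=
    fun W e => (if e.1 ∈ W then 1 else 0) - (if e.2 ∈ W then 1 else 0)
  have hε : ∀ W e, ε W e = 0 ∨ ε W e = 1 ∨ ε W e = -1 := by
    intro W e; simp only [ε]; split_ifs <;> simp
  have hcut : ∀ W (g : Edge n → ℕ) , cutv W (∑ e ∈ T, (g e : ℝ) • ev e.1 e.2) =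
      ((∑ e ∈ T, (g e : ℤ) * ε W e : ℤ) : ℝ) := by
    intro W g
    rw [map_sum]
    push_cast
    refine Finset.sum_congr rfl (fun e _ => ?_)
    rw [map_smul, cutv_ev, smul_eq_mul]
    simp [ε]
  obtain ⟨s, hs, hsum, hnca⟩ := exists_nca hnc (∑ e ∈ T, Multiset.replicate (D e) e) (by
    intro e he
    rw [Multiset.mem_sum] at he
    obtain ⟨f, hf, he⟩ := he
    obtain rfl := Multiset.eq_of_mem_replicate he
    exact mem_closure_iff.2 ⟨hT.1 _ hf, .single ⟨hT.1 _ hf, hf⟩⟩)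
  rw [msum_rep, msum_eq] at hsum
  have hconn : (toSG s.toFinset).Connected := by
    refine conn_of_cut hnca.gr (fun W hW u v hu => ?_)
    have h0 : cutv (Finset.univ.filter (· ∈ W))
        (∑ e ∈ s.toFinset, (s.count e : ℝ) • ev e.1 e.2) = 0 := by
      rw [map_sum]
      refine Finset.sum_eq_zero (fun e he => ?_)
      rw [map_smul, cutv_ev]
      have := hW e.1 e.2 he
      simp [this]
    rw [hsum, hcut] at h0
    have h1 : ∑ e ∈ T, (2 ^ K * (d e : ℤ) + 2 ^ idx e) * ε (Finset.univ.filter (· ∈ W)) e = 0 := by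
      have : ∑ e ∈ T, ((D e : ℕ) : ℤ) * ε (Finset.univ.filter (· ∈ W)) e = 0 := by exact_mod_cast h0
      simpa [D] using this
    have h2 := odd_sum T idx hidx K hK d _ (hε _) h1
    refine (reach_cut (hT.2.connected.preconnected u v) W (fun a b hab => ?_)).1 hu
    have h3 := h2 (a, b) hab
    simp only [ε, Finset.mem_filter, Finset.mem_univ, true_and] at h3
    by_cases ha : a ∈ W <;> by_cases hb : b ∈ W <;> simp_all
  have htree := hnca.tree hconn
  refine ⟨s.toFinset, ⟨htree, hnca.nc, hnca.alt, fun e he => hs e (by simpa using he)⟩, ?_⟩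
  have hspan : ∑ e ∈ T, (d e : ℝ) • ev e.1 e.2 ∈ Submodule.span ℝ
      ((fun e : Edge n => ev e.1 e.2) '' (s.toFinset : Set (Edge n))) :=
    Submodule.sum_mem _ (fun e _ => Submodule.smul_mem _ _
      (reach_span (hconn.preconnected e.1 e.2)))
  rw [Submodule.mem_span_image_finset_iff_exists_fun'] at hspan
  obtain ⟨c, hc⟩ := hspan
  have hnat : ∀ e : Edge n, ∃ m : ℕ, e ∈ s.toFinset → c e = m := by
    intro e
    by_cases he : e ∈ s.toFinset
    · obtain ⟨W, hW⟩ := tree_cut htree e he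
      have h1 := cut_coeff he hW c
      rw [hc, hcut] at h1
      have h2 := cut_coeff he hW (fun e => (s.count e : ℝ))
      rw [hsum, hcut] at h2
      have h2' : ∑ e ∈ T, ((D e : ℕ) : ℤ) * ε W e = (s.count e : ℤ) := by exact_mod_cast h2
      have h3 : ∑ e ∈ T, ((D e : ℕ) : ℤ) * ε W e =
          2 ^ K * (∑ e ∈ T, (d e : ℤ) * ε W e) + ∑ e ∈ T, 2 ^ idx e * ε W e := by
        rw [Finset.mul_sum, ← Finset.sum_add_distrib]
        refine Finset.sum_congr rfl (fun e _ => ?_)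
        simp only [D]; push_cast; ring
      have h4 : ∑ e ∈ T, 2 ^ idx e * ε W e ≤ (L : ℤ) := by
        rw [hL]; push_cast
        refine Finset.sum_le_sum (fun e _ => ?_)
        have : (0 : ℤ) < 2 ^ idx e := by positivity
        rcases hε W e with h | h | h <;> rw [h] <;> linarith
      have h5 : (L : ℤ) < 2 ^ K := by exact_mod_cast hLK
      have h6 : 0 ≤ ∑ e ∈ T, (d e : ℤ) * ε W e := by
        by_contra hneg
        push Not at hneg
        have : (0 : ℤ) ≤ (s.count e : ℤ) := by positivity
        nlinarith
      refine ⟨(∑ e ∈ T, (d e : ℤ) * ε W e).toNat, fun _ => ?_⟩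
      rw [← h1]
      exact_mod_cast (Int.toNat_of_nonneg h6).symm
    · exact ⟨0, fun h => absurd h he⟩
  choose m hm using hnat
  refine ⟨m, ?_⟩
  rw [← hc]
  exact Finset.sum_congr rfl (fun e he => by rw [hm e he])

lemma NCA.ncf {n : ℕ} {B : EdgeSet n} (h : NCA B) {i j k l : Fin (n+1)} (h1 : i < j) (h2 : j < k)
    (h3 : k < l) (ha : (i, k) ∈ B) (hb : (j, l) ∈ B) : False :=
  h.nc ⟨i, j, k, l, h1, h2, h3, ha, hb⟩

lemma NCA.altf {n : ℕ} {B : EdgeSet n} (h : NCA B) {i j k : Fin (n+1)}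
    (ha : (i, j) ∈ B) (hb : (j, k) ∈ B) : False :=
  h.alt ⟨i, j, k, h.gr _ ha, h.gr _ hb, ha, hb⟩

lemma exists_c {n : ℕ} {B : EdgeSet n} (hB : IsGraph B) {i q : Fin (n+1)} (hiq : i < q) :
    ∃ c, i ≤ c ∧ c < q ∧ (c = i ∨ (i, c) ∈ B) ∧ ∀ y, (i, y) ∈ B → y < q → y ≤ c := by
  classical
  obtain ⟨c, hc, hmax⟩ := Finset.exists_max_image
    (insert i (Finset.univ.filter (fun y => y < q ∧ (i, y) ∈ B))) id ⟨i, by simp⟩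
  have hmax' : ∀ y, (i, y) ∈ B → y < q → y ≤ c := fun y h1 h2 => hmax y (by simp [h1, h2])
  simp only [Finset.mem_insert, Finset.mem_filter, Finset.mem_univ, true_and] at hc
  rcases hc with rfl | ⟨h1, h2⟩
  · exact ⟨c, le_rfl, hiq, Or.inl rfl, hmax'⟩
  · exact ⟨c, (hB _ h2).le, h1, Or.inr h2, hmax'⟩

lemma lemL {n : ℕ} {B : EdgeSet n} (h : NCA B) (hc : (toSG B).Connected) {i q c j : Fin (n+1)}
    (hiq : (i, q) ∈ B) (hic : i ≤ c) (hci : c = i ∨ (i, c) ∈ B)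
    (hmax : ∀ y, (i, y) ∈ B → y < q → y ≤ c) (hcj : c < j) (hjq : j < q) :
    ∃ p, i < p ∧ p ≤ j ∧ (p, q) ∈ B := by
  by_contra hcon
  push Not at hcon
  have H : ∀ p, (p, q) ∈ B → i < p → j < p := by
    intro p hp hip
    by_contra hh
    exact hcon p hip (not_lt.1 hh) hp
  let W : Set (Fin (n+1)) := {v | c < v ∧ v < q ∧ ∀ x, (x, q) ∈ B → i < x → v < x}
  have hj : j ∈ W := ⟨hcj, hjq, H⟩
  have hi : i ∉ W := fun hw => absurd hw.1 (not_lt.2 hic)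
  refine hi ((reach_cut (hc.preconnected j i) W ?_).1 hj)
  intro x y hxy
  have hlt : x < y := h.gr _ hxy
  constructor
  · rintro ⟨h1, h2, h3⟩
    have hyq : y < q := by
      rcases lt_trichotomy y q with hy | hy | hy
      · exact hy
      · subst hy
        exact absurd (h3 x hxy (hic.trans_lt h1)) (lt_irrefl _)
      · exact (h.ncf (hic.trans_lt h1) h2 hy hiq hxy).elim
    refine ⟨h1.trans hlt, hyq, fun p hp hip => ?_⟩
    have hxp := h3 p hp hip
    rcases lt_trichotomy y p with hy | hy | hy
    · exact hy
    · subst hy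
      exact (h.altf hxy hp).elim
    · exact (h.ncf hxp hy hyq hxy hp).elim
  · rintro ⟨h1, h2, h3⟩
    refine ⟨?_, hlt.trans h2, fun p hp hip => hlt.trans (h3 p hp hip)⟩
    by_contra hxc
    push Not at hxc
    rcases lt_trichotomy x i with hx | hx | hx
    · exact h.ncf hx (hic.trans_lt h1) h2 hxy hiq
    · subst hx
      exact absurd (hmax y hxy h2) (not_le.2 h1)
    · have hci' : (i, c) ∈ B := hci.resolve_left (hx.trans_le hxc).ne'
      rcases hxc.eq_or_lt with rfl | hxc
      · exact h.altf hci' hxy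
      · exact h.ncf hx hxc h1 hci' hxy

lemma exists_q {n : ℕ} {B : EdgeSet n} (h : NCA B) (hc : (toSG B).Connected) {i j : Fin (n+1)}
    (hij : i < j) (hnot : (i, j) ∉ B)
    (H : ∀ x y, (x, y) ∈ B → x < i → i ≤ y → y < j → False) :
    ∃ q p, j < q ∧ (i, q) ∈ B ∧ i < p ∧ p ≤ j ∧ (p, q) ∈ B := by
  classical
  have hex : ∃ q, j < q ∧ (i, q) ∈ B := by
    by_contra hcon
    push Not at hcon
    obtain ⟨d, hid, hdj, hd, hmax⟩ := exists_c h.gr hij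
    have hout : ∀ y, (i, y) ∈ B → y ≤ d := by
      intro y hy
      rcases lt_trichotomy y j with h1 | h1 | h1
      · exact hmax y hy h1
      · subst h1; exact absurd hy hnot
      · exact absurd hy (hcon y h1)
    let W : Set (Fin (n+1)) := {v | i ≤ v ∧ v ≤ d}
    have hj : j ∉ W := fun hw => absurd hw.2 (not_le.2 hdj)
    refine hj ((reach_cut (hc.preconnected i j) W ?_).1 ⟨le_rfl, hid⟩)
    intro x y hxy
    have hlt : x < y := h.gr _ hxy
    constructor
    · rintro ⟨h1, h2⟩
      refine ⟨h1.trans hlt.le, ?_⟩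
      rcases h1.eq_or_lt with rfl | h1
      · exact hout y hxy
      · by_contra hy
        push Not at hy
        have hd' : (i, d) ∈ B := hd.resolve_left (h1.trans_le h2).ne'
        rcases h2.eq_or_lt with rfl | h2
        · exact h.altf hd' hxy
        · exact h.ncf h1 h2 hy hd' hxy
    · rintro ⟨h1, h2⟩
      refine ⟨?_, hlt.le.trans h2⟩
      by_contra hx
      exact H x y hxy (not_le.1 hx) h1 (h2.trans_lt hdj)
  obtain ⟨q0, hq0⟩ := hex
  obtain ⟨q, hq, hmin⟩ := Finset.exists_min_image
    (Finset.univ.filter (fun q => j < q ∧ (i, q) ∈ B)) id ⟨q0, by simpa using hq0⟩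
  simp only [Finset.mem_filter, Finset.mem_univ, true_and] at hq
  obtain ⟨c, hic, hcq, hci, hmax⟩ := exists_c h.gr (hij.trans hq.1)
  have hcj : c < j := by
    rcases lt_trichotomy c j with h1 | h1 | h1
    · exact h1
    · subst h1
      exact absurd (hci.resolve_left hij.ne') hnot
    · have := hmin c (by simpa using ⟨h1, hci.resolve_left (hij.trans h1).ne'⟩)
      exact absurd this (not_le.2 hcq)
  obtain ⟨p, hp⟩ := lemL h hc hq.2 hic hci hmax hcj hq.1
  exact ⟨q, p, hq.1, hq.2, hp⟩

lemma NCAST.nca {n : ℕ} {T F : EdgeSet n} (h : F ∈ NCASpanningTrees T) : NCA F :=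
  ⟨h.1.1, h.2.1, h.2.2.1⟩

lemma shell {n : ℕ} {T A B : EdgeSet n} (hnc : Noncrossing T) (hA : A ∈ NCASpanningTrees T)
    (hB : B ∈ NCASpanningTrees T) (hlt : treeLexLT A B) :
    ∃ e ∈ B, e ∉ A ∧ ∃ C ∈ NCASpanningTrees T, B.erase e ⊆ C ∧ C ≠ B ∧ ¬ treeLexLT B C := by
  classical
  obtain ⟨⟨i, j⟩, hgA, hgB, hmin⟩ := hlt
  have nA := NCAST.nca hA
  have nB := NCAST.nca hB
  have hij : i < j := nA.gr _ hgA
  obtain ⟨q, p0, hjq, hiq, hip0, hp0j, hp0q⟩ := exists_q nB hB.1.2.connected hij hgB (by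
    intro x y hxy hx hy hyj
    have hxyA : (x, y) ∈ A := by
      by_contra hn
      have := hmin (x, y) (by simp [hxy, hn])
      rcases this with h1 | ⟨h1, _⟩
      · exact absurd hx (not_lt.2 h1.le)
      · exact absurd hx (by simp only at h1; rw [h1]; exact lt_irrefl _)
    rcases hy.eq_or_lt with rfl | hy
    · exact nA.altf hxyA hgA
    · exact nA.ncf hx hy hyj hxyA hgA)
  obtain ⟨p, hp, hpmax⟩ := Finset.exists_max_image
    (Finset.univ.filter (fun p => p ≤ j ∧ (p, q) ∈ B)) id ⟨p0, by simpa using ⟨hp0j, hp0q⟩⟩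
  simp only [Finset.mem_filter, Finset.mem_univ, true_and] at hp
  have hp0p : p0 ≤ p := hpmax p0 (by simpa using ⟨hp0j, hp0q⟩)
  have hip : i < p := hip0.trans_le hp0p
  obtain ⟨a, ha, hamax⟩ := Finset.exists_max_image
    (Finset.univ.filter (fun a => a < p ∧ (a, q) ∈ B)) id ⟨i, by simpa using ⟨hip, hiq⟩⟩
  simp only [Finset.mem_filter, Finset.mem_univ, true_and] at ha
  have hia : i ≤ a := hamax i (by simpa using ⟨hip, hiq⟩)
  obtain ⟨hap, haq⟩ := ha
  obtain ⟨hpj, hpq⟩ := hp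
  have hpq' : p < q := nB.gr _ hpq
  obtain ⟨c, hpc, hcq, hcp, hcmax⟩ := exists_c nB.gr hpq'
  have hjc : j ≤ c := by
    by_contra hcj
    push Not at hcj
    obtain ⟨p', h1, h2, h3⟩ := lemL nB hB.1.2.connected hpq hpc hcp hcmax hcj hjq
    exact absurd (hpmax p' (by simpa using ⟨h2, h3⟩)) (not_le.2 h1)
  -- the new edge is in the closure
  have raj : Relation.ReflTransGen (stp T) a j :=
    (meet hnc (mem_closure_iff.1 (hA.2.2.2 hgA)).2 (mem_closure_iff.1 (hB.2.2.2 haq)).2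
      hia (hap.le.trans hpj) hjq.le).2
  have rpc : Relation.ReflTransGen (stp T) p c := by
    rcases hcp with h1 | h1
    · rw [h1]
    · exact (mem_closure_iff.1 (hB.2.2.2 h1)).2
  have rac : Relation.ReflTransGen (stp T) a c := (meet hnc raj rpc hap.le hpj hjc).1
  have hac : a < c := hap.trans_le hpc
  have hacB : (a, c) ∉ B := by
    intro hh
    rcases hpc.eq_or_lt with rfl | hpc
    · exact nB.altf hh hpq
    · exact nB.ncf hap hpc hcq hh hpq
  have hcp' : p < c → (p, c) ∈ B := fun hh => hcp.resolve_left hh.ne'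
  let C : EdgeSet n := insert (a, c) (B.erase (p, q))
  have memC : ∀ x y, (x, y) ∈ C ↔ (x = a ∧ y = c) ∨ ((x, y) ∈ B ∧ ¬ (x = p ∧ y = q)) := by
    intro x y; simp [C, and_comm]
  have nC : NCA C := by
    refine ⟨?_, ?_, ?_⟩
    · rintro ⟨x, y⟩ hxy
      rcases (memC _ _).1 hxy with ⟨rfl, rfl⟩ | h1
      · exact hac
      · exact nB.gr _ h1.1
    · rintro ⟨x, x', y, y', h1, h2, h3, hx, hx'⟩
      rcases (memC _ _).1 hx with ⟨rfl, rfl⟩ | hx2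
      · rcases (memC _ _).1 hx' with ⟨rfl, rfl⟩ | hx'
        · exact absurd h1 (lt_irrefl _)
        · -- a < x' < c < y'
          rcases lt_trichotomy y' q with hy | hy | hy
          · rcases lt_trichotomy x' p with hz | hz | hz
            · exact nB.ncf hz (hpc.trans_lt h3) hy hx'.1 hpq
            · subst hz
              exact absurd (hcmax _ hx'.1 hy) (not_le.2 h3)
            · exact nB.ncf hz h2 h3 (hcp' (hz.trans h2)) hx'.1
          · subst hy
            rcases lt_trichotomy x' p with hz | hz | hz
            · exact absurd (hamax x' (by simpa using ⟨hz, hx'.1⟩)) (not_le.2 h1)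
            · exact hx'.2 ⟨hz, rfl⟩
            · exact nB.ncf hz h2 h3 (hcp' (hz.trans h2)) hx'.1
          · exact nB.ncf h1 (h2.trans hcq) hy haq hx'.1
      · rcases (memC _ _).1 hx' with ⟨rfl, rfl⟩ | hx'
        · exact nB.ncf h1 h2 (h3.trans hcq) hx2.1 haq
        · exact nB.ncf h1 h2 h3 hx2.1 hx'.1
    · rintro ⟨x, y, z, h1, h2, hx, hx'⟩
      rcases (memC _ _).1 hx with ⟨rfl, rfl⟩ | hx2
      · rcases (memC _ _).1 hx' with ⟨rfl, rfl⟩ | hx'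
        · exact absurd h1 (lt_irrefl _)
        · rcases hcp with h4 | h4
          · rw [h4] at hx'
            rcases lt_trichotomy z q with hz | hz | hz
            · have := hcmax z hx'.1 hz
              exact absurd h2 (not_lt.2 this)
            · exact hx'.2 ⟨rfl, hz⟩
            · exact nB.ncf hap hpq' hz haq hx'.1
          · exact nB.altf h4 hx'.1
      · rcases (memC _ _).1 hx' with ⟨rfl, rfl⟩ | hx'
        · exact nB.altf hx2.1 haq
        · exact nB.altf hx2.1 hx'.1
  have cC : (toSG C).Connected := by
    refine conn_of_cut nC.gr (fun W hW u v hu => ?_)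
    refine (reach_cut (hB.1.2.connected.preconnected u v) W (fun x y hxy => ?_)).1 hu
    by_cases h1 : x = p ∧ y = q
    · obtain ⟨rfl, rfl⟩ := h1
      have e1 := hW a c ((memC _ _).2 (Or.inl ⟨rfl, rfl⟩))
      have e2 := hW a y ((memC _ _).2 (Or.inr ⟨haq, fun h => hap.ne h.1⟩))
      rcases hcp with h4 | h4
      · rw [h4] at e1; exact e1.symm.trans e2
      · have e3 := hW x c ((memC _ _).2 (Or.inr ⟨h4, fun h => hcq.ne h.2⟩))
        exact e3.trans (e1.symm.trans e2)
    · exact hW x y ((memC _ _).2 (Or.inr ⟨hxy, h1⟩))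
  refine ⟨(p, q), hpq, ?_, C, ⟨nC.tree cC, nC.nc, nC.alt, ?_⟩, ?_, ?_, ?_⟩
  · intro hh
    rcases hpj.eq_or_lt with rfl | hpj
    · exact nA.altf hgA hh
    · exact nA.ncf hip hpj hjq hgA hh
  · rintro ⟨x, y⟩ hxy
    rcases (memC _ _).1 hxy with ⟨rfl, rfl⟩ | h1
    · exact mem_closure_iff.2 ⟨hac, rac⟩
    · exact hB.2.2.2 h1.1
  · exact Finset.subset_insert _ _
  · intro hh
    exact hacB (hh ▸ (memC a c).2 (Or.inl ⟨rfl, rfl⟩))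
  · rintro ⟨⟨x, y⟩, h1, h2, h3⟩
    have h4 : x = p ∧ y = q := by
      by_contra hn
      exact h2 ((memC _ _).2 (Or.inr ⟨h1, hn⟩))
    obtain ⟨rfl, rfl⟩ := h4
    have := h3 (a, c) (by
      rw [Finset.mem_union, Finset.mem_sdiff, Finset.mem_sdiff]
      exact Or.inr ⟨(memC _ _).2 (Or.inl ⟨rfl, rfl⟩), hacB⟩)
    rcases this with h5 | ⟨h5, _⟩
    · exact absurd hap (not_lt.2 h5.le)
    · exact hap.ne h5.symm

lemma cone_add {n : ℕ} {E : EdgeSet n} {x y : Vtype n} (hx : x ∈ cone E) (hy : y ∈ cone E) :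
    x + y ∈ cone E := by
  obtain ⟨c, hc, rfl⟩ := hx
  obtain ⟨d, hd, rfl⟩ := hy
  exact ⟨fun e => c e + d e, fun e => add_nonneg (hc e) (hd e), by
    simp [add_smul, Finset.sum_add_distrib]⟩

lemma cone_smul {n : ℕ} {E : EdgeSet n} {x : Vtype n} (hx : x ∈ cone E) {a : ℝ} (ha : 0 ≤ a) :
    a • x ∈ cone E := by
  obtain ⟨c, hc, rfl⟩ := hx
  exact ⟨fun e => a * c e, fun e => mul_nonneg ha (hc e), by
    simp [mul_smul, Finset.smul_sum]⟩

lemma cone_zero {n : ℕ} (E : EdgeSet n) : (0 : Vtype n) ∈ cone E :=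
  ⟨fun _ => 0, fun _ => le_rfl, by simp⟩

lemma cone_convex {n : ℕ} (E : EdgeSet n) : Convex ℝ (cone E) :=
  fun _ hx _ hy _ _ ha hb _ => cone_add (cone_smul hx ha) (cone_smul hy hb)

lemma cone_mono {n : ℕ} {E F : EdgeSet n} (h : E ⊆ F) : cone E ⊆ cone F := by
  classical
  rintro x ⟨c, hc, rfl⟩
  refine ⟨fun e => if e ∈ E then c e else 0, fun e => by dsimp only; split_ifs; exacts [hc e, le_rfl], ?_⟩
  rw [← Finset.sum_subset h (fun e _ he => by simp [he])]
  exact Finset.sum_congr rfl (fun e he => by simp [he])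

lemma cone_edge {n : ℕ} {E : EdgeSet n} {e : Edge n} (he : e ∈ E) : ev e.1 e.2 ∈ cone E :=
  ⟨fun f => if f = e then 1 else 0, fun f => by dsimp only; split_ifs <;> norm_num, by simp [he]⟩

lemma rootPoly_sub_cone {n : ℕ} (E : EdgeSet n) : RootPoly E ⊆ cone E := by
  refine convexHull_min ?_ (cone_convex E)
  rintro x (hx | hx)
  · rw [Set.mem_singleton_iff.1 hx]; exact cone_zero E
  · exact hx.2

lemma rootPoly_mono {n : ℕ} {E F : EdgeSet n} (h : E ⊆ F) : RootPoly E ⊆ RootPoly F :=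
  convexHull_mono (Set.union_subset_union_right _ (Set.inter_subset_inter_right _ (cone_mono h)))

lemma closure_cone {n : ℕ} {T : EdgeSet n} {a b : Fin (n+1)}
    (h : Relation.ReflTransGen (stp T) a b) : ev a b ∈ cone T := by
  induction h with
  | refl => rw [ev_self]; exact cone_zero T
  | @tail b c _ h ih => rw [← ev_add a b c]; exact cone_add ih (cone_edge h.2)

lemma mem_rootPoly {n : ℕ} {E F : EdgeSet n} (hF : IsGraph F)
    (h : ∀ e ∈ F, ev e.1 e.2 ∈ cone E) (c : Edge n → ℝ) (hc : ∀ e ∈ F, 0 ≤ c e)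
    (hs : ∑ e ∈ F, c e ≤ 1) : ∑ e ∈ F, c e • ev e.1 e.2 ∈ RootPoly E := by
  classical
  have h0 : ((0, 0) : Edge n) ∉ F := fun hh => absurd (hF _ hh) (lt_irrefl _)
  have hsum : ∑ e ∈ F, (if e = (0, 0) then 1 - ∑ e ∈ F, c e else c e) = ∑ e ∈ F, c e :=
    Finset.sum_congr rfl (fun e he => if_neg (by rintro rfl; exact h0 he))
  have key := (convex_convexHull ℝ ({0} ∪ Vbar E)).sum_mem (t := insert (0, 0) F)
    (w := fun e => if e = (0, 0) then 1 - ∑ e ∈ F, c e else c e)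
    (z := fun e : Edge n => ev e.1 e.2) (by
      intro e he
      split_ifs with h1
      · linarith
      · exact hc e ((Finset.mem_insert.1 he).resolve_left h1)) (by
      rw [Finset.sum_insert h0, if_pos rfl]
      rw [hsum]
      ring) (by
      intro e he
      refine subset_convexHull ℝ _ ?_
      rcases Finset.mem_insert.1 he with rfl | he
      · left; simp [ev_self]
      · right; exact ⟨⟨e.1, e.2, hF e he, rfl⟩, h e he⟩)
  rw [Finset.sum_insert h0] at key
  simp only [ev_self, smul_zero, zero_add] at key
  rw [Finset.sum_congr rfl (g := fun e => c e • ev e.1 e.2) (fun e he => by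
        rw [if_neg]; rintro rfl; exact h0 he)] at key
  exact key

lemma rootPoly_pos {n : ℕ} (E : EdgeSet n) : RootPoly E ⊆ {x | ∑ v, max (x v) 0 ≤ 1} := by
  refine convexHull_min ?_ ?_
  · rintro x (hx | ⟨⟨i, j, _, rfl⟩, _⟩)
    · rw [Set.mem_singleton_iff.1 hx]; simp
    · have : ∑ v, max (ev i j v) 0 ≤ ∑ v, (Pi.single i (1 : ℝ) : Vtype n) v := by
        refine Finset.sum_le_sum (fun v _ => ?_)
        simp only [ev, Pi.sub_apply, Pi.single_apply]
        split_ifs <;> norm_num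
      refine this.trans ?_
      simp
  · intro x hx y hy a b ha hb hab
    have : ∑ v, max ((a • x + b • y) v) 0 ≤ a * ∑ v, max (x v) 0 + b * ∑ v, max (y v) 0 := by
      rw [Finset.mul_sum, Finset.mul_sum, ← Finset.sum_add_distrib]
      refine Finset.sum_le_sum (fun v _ => ?_)
      simp only [Pi.add_apply, Pi.smul_apply, smul_eq_mul]
      refine max_le ?_ ?_
      · exact add_le_add (mul_le_mul_of_nonneg_left (le_max_left _ _) ha)
          (mul_le_mul_of_nonneg_left (le_max_left _ _) hb)
      · positivity
    simp only [Set.mem_ofPred_eq] at hx hy ⊢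
    nlinarith

lemma coeff_count {ι : Type*} [DecidableEq ι] (F R : Finset ι) (o : ι) (ho : o ∉ F) (hR : R ⊆ F)
    (t : ℕ) :
    PowerSeries.coeff t ((PowerSeries.X : PowerSeries ℚ) ^ R.card *
      (PowerSeries.mk 1) ^ (F.card + 1)) =
      (((Finset.finsuppAntidiag (insert o F) t).filter (fun l => ∀ e ∈ R, l e ≠ 0)).card : ℚ) := by
  have h1 : (PowerSeries.X : PowerSeries ℚ) ^ R.card * (PowerSeries.mk 1) ^ (F.card + 1) =
      ∏ e ∈ insert o F, ((if e ∈ R then PowerSeries.X else 1) * PowerSeries.mk 1) := by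
    rw [Finset.prod_mul_distrib, Finset.prod_const, Finset.card_insert_of_notMem ho,
      Finset.prod_ite_mem,
      Finset.inter_eq_right.2 (hR.trans (Finset.subset_insert o F)), Finset.prod_const]
  rw [h1, PowerSeries.coeff_prod, Finset.card_filter]
  push_cast
  refine Finset.sum_congr rfl (fun l hl => ?_)
  have h2 : ∀ e, PowerSeries.coeff (l e)
      ((if e ∈ R then PowerSeries.X else 1) * (PowerSeries.mk 1 : PowerSeries ℚ)) =
      if (e ∈ R → l e ≠ 0) then 1 else 0 := by
    intro e
    by_cases he : e ∈ R
    · simp only [he, if_true, forall_true_left]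
      rcases Nat.eq_zero_or_eq_succ_pred (l e) with h | h
      · simp [h]
      · rw [h, PowerSeries.coeff_succ_X_mul]; simp
    · simp [he]
  rw [Finset.prod_congr rfl (fun e _ => h2 e), Finset.prod_ite_zero]
  simp only [Finset.prod_const_one]
  congr 1
  apply propext
  constructor
  · intro h e he; exact h e (Finset.mem_insert_of_mem (hR he)) he
  · intro h e _ he; exact h e he


lemma val_int {n : ℕ} (F : EdgeSet n) (c : Edge n → ℕ) (i : Fin (n+1)) :
    ∃ z : ℤ, (∑ e ∈ F, (c e : ℝ) • ev e.1 e.2) i = (z : ℝ) := by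
  classical
  refine ⟨∑ e ∈ F, (c e : ℤ) * ((if i = e.1 then 1 else 0) - (if i = e.2 then 1 else 0)), ?_⟩
  simp only [Finset.sum_apply, Pi.smul_apply, ev, Pi.sub_apply, Pi.single_apply, smul_eq_mul]
  push_cast
  rfl

lemma zero_mem_rootPoly {n : ℕ} (E : EdgeSet n) : (0 : Vtype n) ∈ RootPoly E :=
  subset_convexHull ℝ _ (Or.inl rfl)

lemma count {n : ℕ} (T : EdgeSet n) (hT : IsTreeG T)
    (hnc : Noncrossing T) (k : ℕ) (Ts : Fin k → EdgeSet n)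
    (hmem : ∀ m, Ts m ∈ NCASpanningTrees T)
    (huniq : ∀ F ∈ NCASpanningTrees T, ∃! m : Fin k, Ts m = F)
    (R : Fin k → EdgeSet n) (hRs : ∀ m, R m ⊆ Ts m)
    (hR1 : ∀ l m, l < m → ∃ e ∈ R m, e ∉ Ts l)
    (hR2 : ∀ m, ∀ e ∈ R m, RootPoly ((Ts m).erase e) ⊆
        ⋃ l : Fin k, ⋃ (_ : l < m), RootPoly (Ts l)) (t : ℕ) :
    latticeCount (RootPoly T) t = ∑ m, ((Finset.finsuppAntidiag (insert (0, 0) (Ts m)) t).filter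
      (fun l => ∀ e ∈ R m, l e ≠ 0)).card := by
  classical
  have ho : ∀ m, ((0, 0) : Edge n) ∉ Ts m := fun m hh =>
    absurd ((hmem m).1.1 _ hh) (lt_irrefl _)
  have hnca : ∀ m, NCA (Ts m) := fun m => NCAST.nca (hmem m)
  have hsl : ∀ m (l : Edge n →₀ ℕ), l ∈ Finset.finsuppAntidiag (insert (0, 0) (Ts m)) t →
      l (0, 0) + ∑ e ∈ Ts m, l e = t := by
    intro m l hl
    rw [Finset.mem_finsuppAntidiag, Finset.sum_insert (ho m)] at hl
    exact hl.1
  set φ : (Σ _ : Fin k, (Edge n →₀ ℕ)) → Vtype n :=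
    fun q => ∑ e ∈ Ts q.1, (q.2 e : ℝ) • ev e.1 e.2 with hφ
  set W : Fin k → Finset (Edge n →₀ ℕ) := fun m =>
    (Finset.finsuppAntidiag (insert (0, 0) (Ts m)) t).filter (fun l => ∀ e ∈ R m, l e ≠ 0) with hW
  have huq : ∀ m m' (l l' : Edge n →₀ ℕ), φ ⟨m, l⟩ = φ ⟨m', l'⟩ → ∀ e,
      (if e ∈ Ts m then l e else 0) = (if e ∈ Ts m' then l' e else 0) := by
    intro m m' l l' h e
    have := NCA.uniq (hnca m) (hnca m') (c := fun e => (l e : ℝ)) (c' := fun e => (l' e : ℝ))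
      (fun e _ => Nat.cast_nonneg _) (fun e _ => Nat.cast_nonneg _) h e
    exact_mod_cast this
  have hlt : ∀ m m' (l l' : Edge n →₀ ℕ), l ∈ W m → φ ⟨m, l⟩ = φ ⟨m', l'⟩ → ¬ m' < m := by
    intro m m' l l' hl h hlt
    obtain ⟨e, he, hne⟩ := hR1 _ _ hlt
    have := huq m m' l l' h e
    rw [if_pos (hRs m he), if_neg hne] at this
    exact (Finset.mem_filter.1 hl).2 e he this
  have hinj : Set.InjOn φ ↑(Finset.univ.sigma W) := by
    rintro ⟨m, l⟩ hl ⟨m', l'⟩ hl' h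
    have hl1 : l ∈ W m := (Finset.mem_sigma.1 (Finset.mem_coe.1 hl)).2
    have hl2 : l' ∈ W m' := (Finset.mem_sigma.1 (Finset.mem_coe.1 hl')).2
    have hm : m = m' := le_antisymm (not_lt.1 (hlt _ _ _ _ hl1 h))
      (not_lt.1 (hlt _ _ _ _ hl2 h.symm))
    subst hm
    have hin : ∀ e ∈ Ts m, l e = l' e := by
      intro e he
      have := huq m m l l' h e
      rwa [if_pos he, if_pos he] at this
    have ha1 := (Finset.mem_filter.1 hl1).1
    have ha2 := (Finset.mem_filter.1 hl2).1
    have hb1 := hsl m l ha1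
    have hb2 := hsl m l' ha2
    have hb3 : ∑ e ∈ Ts m, l e = ∑ e ∈ Ts m, l' e := Finset.sum_congr rfl hin
    have hll : l = l' := by
      ext e
      by_cases he : e ∈ Ts m
      · exact hin e he
      · by_cases h0 : e = (0, 0)
        · subst h0; omega
        · have hne : e ∉ insert (0, 0) (Ts m) := by simp only [Finset.mem_insert]; tauto
          rw [Finset.mem_finsuppAntidiag] at ha1 ha2
          rw [Finsupp.notMem_support_iff.1 (fun hh => hne (ha1.2 hh)),
            Finsupp.notMem_support_iff.1 (fun hh => hne (ha2.2 hh))]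
    rw [hll]
  have hset : {x ∈ dilate t (RootPoly T) | ∀ i, ∃ z : ℤ, x i = (z : ℝ)} =
      ↑((Finset.univ.sigma W).image φ) := by
    ext x
    constructor
    · rintro ⟨⟨p, hp, rfl⟩, hz⟩
      dsimp only at hz ⊢
      have hxc : (t : ℝ) • p ∈ cone T := cone_smul (rootPoly_sub_cone T hp) (Nat.cast_nonneg _)
      have hpos : ∑ v, max (((t : ℝ) • p) v) 0 ≤ t := by
        have h1 : ∑ v, max (p v) 0 ≤ 1 := rootPoly_pos T hp
        have h2 : ∑ v, max (((t : ℝ) • p) v) 0 = t * ∑ v, max (p v) 0 := by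
          rw [Finset.mul_sum]
          refine Finset.sum_congr rfl (fun v _ => ?_)
          rw [mul_max_of_nonneg _ _ (Nat.cast_nonneg t), mul_zero]
          rfl
        rw [h2]
        nlinarith [(Nat.cast_nonneg t : (0 : ℝ) ≤ t)]
      generalize (t : ℝ) • p = x at hz hxc hpos
      obtain ⟨d, hd⟩ := tree_nat hT hxc hz
      obtain ⟨S, hS, c0, hc0⟩ := exists_tree hT hnc d
      obtain ⟨m0, rfl, -⟩ := huniq S hS
      have hex : ∃ m : Fin k, ∃ c : Edge n → ℕ, x = ∑ e ∈ Ts m, (c e : ℝ) • ev e.1 e.2 :=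
        ⟨m0, c0, hd.trans hc0⟩
      obtain ⟨m, ⟨c, hc⟩, hmin⟩ := WellFounded.has_min (wellFounded_lt (α := Fin k))
        {m | ∃ c : Edge n → ℕ, x = ∑ e ∈ Ts m, (c e : ℝ) • ev e.1 e.2} hex
      have hct : ∑ e ∈ Ts m, c e ≤ t := by
        have := NCA.sum_eq (hnca m) (c := fun e => (c e : ℝ)) (fun e _ => Nat.cast_nonneg _)
        rw [← hc] at this
        have h2 : ((∑ e ∈ Ts m, c e : ℕ) : ℝ) ≤ t := by
          push_cast
          rw [this]
          exact hpos
        exact_mod_cast h2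
      have hnz : ∀ e ∈ R m, c e ≠ 0 := by
        intro e he h0
        have hx1 : x = ∑ e ∈ (Ts m).erase e, (c e : ℝ) • ev e.1 e.2 := by
          rw [hc, ← Finset.add_sum_erase _ _ (hRs m he), h0]
          simp
        set N : ℝ := (∑ e ∈ (Ts m).erase e, (c e : ℝ)) + 1 with hN
        have hNn : 0 ≤ ∑ e ∈ (Ts m).erase e, (c e : ℝ) :=
          Finset.sum_nonneg (fun _ _ => Nat.cast_nonneg _)
        have hNp : 0 < N := by linarith
        have hmp := mem_rootPoly (E := (Ts m).erase e) (F := (Ts m).erase e)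
          (fun f hf => (hmem m).1.1 f (Finset.mem_of_mem_erase hf))
          (fun f hf => cone_edge hf) (fun f => N⁻¹ * c f) (fun f _ => by positivity) (by
            rw [← Finset.mul_sum, inv_mul_le_iff₀ hNp]; linarith)
        simp only [mul_smul] at hmp
        rw [← Finset.smul_sum, ← hx1] at hmp
        have hmp2 := hR2 m e he hmp
        simp only [Set.mem_iUnion] at hmp2
        obtain ⟨l, hl, hmp3⟩ := hmp2
        have hxl : x ∈ cone (Ts l) := by
          have := cone_smul (rootPoly_sub_cone _ hmp3) hNp.le
          rwa [smul_inv_smul₀ hNp.ne'] at this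
        exact hmin l (tree_nat (hmem l).1 hxl hz) hl
      have hsup : ∀ e, (if e ∈ Ts m then c e else if e = (0, 0) then t - ∑ e ∈ Ts m, c e else 0) ≠ 0
          → e ∈ insert (0, 0) (Ts m) := by
        intro e h
        split_ifs at h with h1 h2
        · exact Finset.mem_insert_of_mem h1
        · exact Finset.mem_insert.2 (Or.inl h2)
        · exact absurd rfl h
      refine Finset.mem_coe.2 (Finset.mem_image.2 ⟨⟨m, Finsupp.onFinset _ _ hsup⟩, ?_, ?_⟩)
      · refine Finset.mem_sigma.2 ⟨Finset.mem_univ _, Finset.mem_filter.2 ⟨?_, ?_⟩⟩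
        · rw [Finset.mem_finsuppAntidiag]
          refine ⟨?_, Finsupp.support_onFinset_subset (hf := hsup)⟩
          rw [Finset.sum_insert (ho m)]
          simp only [Finsupp.onFinset_apply]
          have hs1 : (∑ x ∈ Ts m, if x ∈ Ts m then c x else
              if x = (0, 0) then t - ∑ e ∈ Ts m, c e else 0) = ∑ x ∈ Ts m, c x :=
            Finset.sum_congr rfl (fun e he => if_pos he)
          rw [if_neg (ho m), hs1]
          simp only [if_true]
          omega
        · intro e he
          simp only [Finsupp.onFinset_apply]
          rw [if_pos (hRs m he)]
          exact hnz e he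
      · rw [hc]
        refine Finset.sum_congr rfl (fun e he => ?_)
        simp only [Finsupp.onFinset_apply]
        rw [if_pos he]
    · intro hx
      obtain ⟨⟨m, l⟩, hl, rfl⟩ := Finset.mem_image.1 (Finset.mem_coe.1 hx)
      have hl1 : l ∈ W m := (Finset.mem_sigma.1 hl).2
      have hb := hsl m l (Finset.mem_filter.1 hl1).1
      refine ⟨?_, fun i => val_int (Ts m) l i⟩
      rcases Nat.eq_zero_or_pos t with rfl | ht
      · refine ⟨0, zero_mem_rootPoly T, ?_⟩
        have hz : ∀ e ∈ Ts m, l e = 0 := by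
          have : ∑ e ∈ Ts m, l e = 0 := by omega
          exact Finset.sum_eq_zero_iff.1 this
        simp only [smul_zero]
        refine (Finset.sum_eq_zero (fun e he => ?_)).symm
        simp [hz e he]
      · have htp : (0 : ℝ) < t := by exact_mod_cast ht
        have hs : ∑ e ∈ Ts m, (l e : ℝ) ≤ t := by
          have : ∑ e ∈ Ts m, l e ≤ t := by omega
          exact_mod_cast this
        have hmp := mem_rootPoly (E := T) (F := Ts m) (hmem m).1.1
          (fun f hf => closure_cone (mem_closure_iff.1 ((hmem m).2.2.2 hf)).2)
          (fun f => (t : ℝ)⁻¹ * l f) (fun f _ => by positivity) (by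
            rw [← Finset.mul_sum, inv_mul_le_iff₀ htp]; linarith)
        refine ⟨_, hmp, ?_⟩
        simp only [mul_smul]
        rw [← Finset.smul_sum, smul_inv_smul₀ htp.ne']
  rw [latticeCount, hset, Set.ncard_coe_finset, Finset.card_image_of_injOn hinj,
    Finset.card_sigma]

lemma count_zero {n : ℕ} (T : EdgeSet n) : latticeCount (RootPoly T) 0 = 1 := by
  rw [latticeCount, Set.ncard_eq_one]
  refine ⟨0, ?_⟩
  ext x
  constructor
  · rintro ⟨⟨p, _, rfl⟩, _⟩
    simp
  · intro hx
    rw [Set.mem_singleton_iff.1 hx]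
    exact ⟨⟨0, zero_mem_rootPoly T, by simp⟩, fun i => ⟨0, by simp⟩⟩

/- STATEMENT 18 -/
theorem stmt18 {n : ℕ} (hn : 1 ≤ n) (T : EdgeSet n) (hT : IsTreeG T)
    (hnc : Noncrossing T) (k : ℕ) (Ts : Fin k → EdgeSet n)
    (hmem : ∀ m, Ts m ∈ NCASpanningTrees T)
    (huniq : ∀ F ∈ NCASpanningTrees T, ∃! m : Fin k, Ts m = F)
    (hord : ∀ m m' : Fin k, m < m' → treeLexLT (Ts m) (Ts m'))
    (r : Fin k → ℕ)
    (hr : ∀ m : Fin k, r m = {e : Edge n | e ∈ Ts m ∧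
      RootPoly ((Ts m).erase e) ⊆
        ⋃ l : Fin k, ⋃ (_ : l < m), RootPoly (Ts l)}.ncard) :
    (1 - PowerSeries.X : PowerSeries ℚ) ^ (n + 1) *
      PowerSeries.mk (fun t => if t = 0 then 1 else (latticeCount (RootPoly T) t : ℚ)) =
      ∑ m : Fin k, (PowerSeries.X : PowerSeries ℚ) ^ (r m) := by
  classical
  set R : Fin k → EdgeSet n := fun m => (Ts m).filter (fun e => RootPoly ((Ts m).erase e) ⊆
        ⋃ l : Fin k, ⋃ (_ : l < m), RootPoly (Ts l)) with hR
  have hrc : ∀ m, r m = (R m).card := by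
    intro m
    rw [hr m, ← Set.ncard_coe_finset]
    congr 1
    ext e
    simp [hR]
  have hR1 : ∀ l m, l < m → ∃ e ∈ R m, e ∉ Ts l := by
    intro l m hlm
    obtain ⟨e, he, hne, C, hC, hsub, hCB, hnlt⟩ := shell hnc (hmem l) (hmem m) (hord l m hlm)
    obtain ⟨l', rfl, -⟩ := huniq C hC
    have hl' : l' < m := by
      rcases lt_trichotomy l' m with h | h | h
      · exact h
      · subst h; exact absurd rfl hCB
      · exact absurd (hord _ _ h) hnlt
    refine ⟨e, Finset.mem_filter.2 ⟨he, fun x hx => ?_⟩, hne⟩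
    exact Set.mem_iUnion.2 ⟨l', Set.mem_iUnion.2 ⟨hl', rootPoly_mono hsub hx⟩⟩
  have hcount := count T hT hnc k Ts hmem huniq R (fun m => Finset.filter_subset _ _) hR1
    (fun m e he => (Finset.mem_filter.1 he).2)
  have hmk : PowerSeries.mk (fun t => if t = 0 then 1 else (latticeCount (RootPoly T) t : ℚ)) =
      ∑ m : Fin k, (PowerSeries.X : PowerSeries ℚ) ^ (r m) * (PowerSeries.mk 1) ^ (n + 1) := by
    ext t
    have h1 : (if t = 0 then 1 else (latticeCount (RootPoly T) t : ℚ)) =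
        (latticeCount (RootPoly T) t : ℚ) := by
      split_ifs with h
      · subst h; rw [count_zero]; simp
      · rfl
    rw [PowerSeries.coeff_mk, h1, hcount t, map_sum]
    push_cast
    refine Finset.sum_congr rfl (fun m _ => ?_)
    have := coeff_count (Ts m) (R m) (0, 0)
      (fun hh => absurd ((hmem m).1.1 _ hh) (lt_irrefl _)) (Finset.filter_subset _ _) t
    rw [tree_card (hmem m).1] at this
    rw [hrc m, this]
    congr!
  rw [hmk, ← Finset.sum_mul, mul_comm, mul_assoc, ← mul_pow,
    PowerSeries.mk_one_mul_one_sub_eq_one, one_pow, mul_one]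

end RPaper
end
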